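/- Let α > 0, d ≥ 1, ℓ = ⌊α⌋⁻, m = C(ℓ+d, ℓ), and fix constants c_L ≥ c_d > 0 and c_N > 0. There exist constants 0 < c₁ ≤ c₂, depending only on α, d, c_d, c_L and c_N, such that the following holds. Let L ∈ (0, 1/2], let x ∈ ℝ^d, and let A ⊂ ℝ^d be a set of m points satisfying the geometric hypotheses at scale L with constants c_L, c_d, c_N. Then the Matérn kernel matrix K_{A,A} is invertible and c₁ L^{2α} Λ ≤ K(x,x) − K_{x,A} K_{A,A}⁻¹ K_{A,x} ≤ c₂ L^{2α} Λ, where Λ = 1 if α ∉ ℕ and Λ = ln(1/L) if α ∈ ℕ. -/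

import Mathlib

open Matrix MeasureTheory

noncomputable section

/-- The Matérn function with regularity `α` on ℝ^d (Fourier normalization):
`K_α(x) = ∫ cos⟨x,ξ⟩ (1+‖ξ‖₂²)^{-(α+d/2)} dξ`. -/
def matern (α : ℝ) (d : ℕ) (x : Fin d → ℝ) : ℝ :=
  ∫ ξ : Fin d → ℝ, Real.cos (∑ j, x j * ξ j) * (1 + ∑ j, ξ j ^ 2) ^ (-(α + (d : ℝ) / 2))

/-- `⌊α⌋⁻`, the largest integer strictly smaller than `α` (for `α > 0`). -/
def lbelow (α : ℝ) : ℕ := Nat.ceil α - 1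

/-- `α` is a (nonnegative) integer. -/
def IsNatVal (α : ℝ) : Prop := ∃ n : ℕ, α = n

/-- The Euclidean norm `‖x‖₂` on ℝ^d. -/
def nrm {d : ℕ} (x : Fin d → ℝ) : ℝ := Real.sqrt (∑ j, x j ^ 2)

/-- Partial derivative in the `j`-th coordinate. -/
def pder (d : ℕ) (j : Fin d) (f : (Fin d → ℝ) → ℝ) : (Fin d → ℝ) → ℝ :=
  fun x => fderiv ℝ f x (Pi.single j 1)

/-- The iterated partial derivative `∂^k` associated with a multi-index `k ∈ ℕ^d`. -/
def mder (d : ℕ) (k : Fin d → ℕ) (f : (Fin d → ℝ) → ℝ) : (Fin d → ℝ) → ℝ :=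
  (List.finRange d).foldr (fun j g => (pder d j)^[k j] g) f

/-- Mixed derivative `F^{(k₁,k₂)}(x₁,x₂) = ∂^{k₁}_{x₁} ∂^{k₂}_{x₂} F(x₁,x₂)`. -/
def mder2 (d : ℕ) (k₁ k₂ : Fin d → ℕ) (F : (Fin d → ℝ) → (Fin d → ℝ) → ℝ)
    (x₁ x₂ : Fin d → ℝ) : ℝ :=
  mder d k₁ (fun y => mder d k₂ (F y) x₂) x₁

/-- The Matérn kernel matrix `K_{A,A} = (K(w_i, w_j))_{i,j}`. -/
def maternMat (α : ℝ) (d : ℕ) {n : ℕ} (w : Fin n → Fin d → ℝ) :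
    Matrix (Fin n) (Fin n) ℝ :=
  Matrix.of fun i j => matern α d (w i - w j)

/-- The Matérn kernel column vector `K_{A,x} = (K(w_i, x))_i`. -/
def maternVec (α : ℝ) (d : ℕ) {n : ℕ} (w : Fin n → Fin d → ℝ) (x : Fin d → ℝ) :
    Fin n → ℝ :=
  fun i => matern α d (w i - x)

/-- The conditional kernel `K̃(x₁,x₂) = K(x₁,x₂) − K_{x₁,A} K_{A,A}⁻¹ K_{A,x₂}`. -/
def condK (α : ℝ) (d : ℕ) {n : ℕ} (w : Fin n → Fin d → ℝ) (x₁ x₂ : Fin d → ℝ) : ℝ :=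
  matern α d (x₁ - x₂) -
    maternVec α d w x₁ ⬝ᵥ ((maternMat α d w)⁻¹ *ᵥ maternVec α d w x₂)

/-- The unit cube `[0,1]^d`. -/
def unitCube (d : ℕ) : Set (Fin d → ℝ) := {x | ∀ t, 0 ≤ x t ∧ x t ≤ 1}

/-- `A = {w_1,…,w_m}` is a norming set for `𝒫_l(Ω)` with norming constant `c`. -/
def IsNorming {d : ℕ} (l : ℕ) (Ω : Set (Fin d → ℝ)) {m : ℕ}
    (w : Fin m → Fin d → ℝ) (c : ℝ) : Prop :=
  ∀ P : MvPolynomial (Fin d) ℝ, P.totalDegree ≤ l →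
    ∀ x ∈ Ω, |MvPolynomial.eval x P| ≤ c * ⨆ i : Fin m, |MvPolynomial.eval (w i) P|

/-- Axis-parallel cube with corner `z` and side length `s`. -/
def cube (d : ℕ) (z : Fin d → ℝ) (s : ℝ) : Set (Fin d → ℝ) :=
  {y | ∀ t, z t ≤ y t ∧ y t ≤ z t + s}

/-- Geometric hypotheses at scale `L` with constants `c_L, c_d, c_N`: `A ∪ {x}` lies in an
axis-parallel cube of side length at most `c_L·L`, the points `w_1,…,w_m, x` are pairwise at
`‖·‖_∞`-distance at least `c_d·L`, and `A` is a norming set for `𝒫_{⌊α⌋⁻}` of that cube with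
norming constant `c_N`. -/
def GeomHyp (α : ℝ) (d : ℕ) (cL cd cN L : ℝ) {m : ℕ}
    (w : Fin m → Fin d → ℝ) (x : Fin d → ℝ) : Prop :=
  ∃ z : Fin d → ℝ, ∃ s : ℝ, 0 ≤ s ∧ s ≤ cL * L ∧
    (∀ i, w i ∈ cube d z s) ∧ x ∈ cube d z s ∧
    (∀ i j, i ≠ j → ∃ t, cd * L ≤ |w i t - w j t|) ∧
    (∀ i, ∃ t, cd * L ≤ |w i t - x t|) ∧
    IsNorming (lbelow α) (cube d z s) w cN

/-- The conditional variance `K(x,x) − K_{x,A} K_{A,A}⁻¹ K_{A,x}`. -/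
def condVar (α : ℝ) (d : ℕ) {n : ℕ} (w : Fin n → Fin d → ℝ) (x : Fin d → ℝ) : ℝ :=
  matern α d (x - x) -
    maternVec α d w x ⬝ᵥ ((maternMat α d w)⁻¹ *ᵥ maternVec α d w x)

/-- On `[-1, 1]` the monomial `s ^ k` is a superposition of exponentials with a continuous and
rapidly decaying density. -/
lemma exists_fourier_density_monomial (k N : ℕ) :
    ∃ (h : ℝ → ℂ) (C : ℝ), Continuous h ∧ 0 ≤ C ∧
      (∀ t, ‖h t‖ ≤ C * ((1 + t ^ 2) ^ N)⁻¹) ∧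
      ∀ s : ℝ, |s| ≤ 1 → ((s ^ k : ℝ) : ℂ) = ∫ t : ℝ, h t * Complex.exp ((s * t : ℝ) * Complex.I) := by
  let χ : ContDiffBump (0 : ℝ) := ⟨1, 2, one_pos, one_lt_two⟩
  let f : ℝ → ℂ := fun u => (((2 * Real.pi * u) ^ k * χ u : ℝ) : ℂ)
  have hf₁ : HasCompactSupport f := by
    have h1 : HasCompactSupport (fun u : ℝ => (2 * Real.pi * u) ^ k * χ u) :=
      χ.hasCompactSupport.mul_left
    exact h1.comp_left (g := fun r : ℝ => (r : ℂ)) (by simp)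
  have hf₂ : ContDiff ℝ (⊤ : ℕ∞) f := by
    refine Complex.ofRealCLM.contDiff.comp ?_
    exact ContDiff.mul (by fun_prop) χ.contDiff
  let F : SchwartzMap ℝ ℂ := hf₁.toSchwartzMap hf₂
  let G : SchwartzMap ℝ ℂ := FourierTransform.fourier F
  refine ⟨G, 2 ^ (2 * N) * (Finset.Iic (2 * N, 0)).sup
    (fun m => SchwartzMap.seminorm ℝ m.1 m.2) G, G.continuous, by positivity, ?_, ?_⟩
  · intro t
    have h1 := SchwartzMap.one_add_le_sup_seminorm_apply (𝕜 := ℝ) (m := (2 * N, 0)) le_rfl le_rfl G t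
    rw [norm_iteratedFDeriv_zero] at h1
    rw [← div_eq_mul_inv, le_div_iff₀ (by positivity), mul_comm]
    refine le_trans ?_ h1
    gcongr
    simp only [pow_mul]
    gcongr
    rw [Real.norm_eq_abs, ← sq_abs]
    nlinarith [abs_nonneg t]
  · intro s hs
    have h1 : FourierTransformInv.fourierInv G = F := FourierTransform.fourierInv_fourier_eq F
    have h2 : F (s / (2 * Real.pi)) = ((s ^ k : ℝ) : ℂ) := by
      have h3 : χ (s / (2 * Real.pi)) = 1 := by
        apply χ.one_of_mem_closedBall
        simp only [mem_closedBall_zero_iff, Real.norm_eq_abs, abs_div]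
        change _ ≤ (1 : ℝ)
        rw [div_le_one (by positivity), abs_of_pos (by positivity : 0 < 2 * Real.pi)]
        linarith [Real.pi_gt_three]
      change (((2 * Real.pi * (s / (2 * Real.pi))) ^ k * χ (s / (2 * Real.pi)) : ℝ) : ℂ) = _
      rw [h3, mul_div_cancel₀ _ (by positivity), mul_one]
    rw [← h2, ← h1, SchwartzMap.fourierInv_coe, Real.fourierInv_eq']
    refine integral_congr_ae (Filter.Eventually.of_forall fun t => ?_)
    simp only [smul_eq_mul]
    rw [mul_comm]
    congr 2
    simp only [RCLike.inner_apply, conj_trivial]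
    congr 2
    field_simp

/-- The exponential sum `∑ i, b i * exp (I * ⟨y i, ξ⟩)`. -/
def expSum {ι : Type*} [Fintype ι] {d : ℕ} (y : ι → Fin d → ℝ) (b : ι → ℝ) (ξ : Fin d → ℝ) : ℂ :=
  ∑ i, (b i : ℂ) * Complex.exp ((∑ t, y i t * ξ t : ℝ) * Complex.I)

/-- The Bessel potential weight `(1 + ‖ξ‖₂²) ^ (-p)`. -/
def besselWeight {d : ℕ} (p : ℝ) (ξ : Fin d → ℝ) : ℝ := (1 + ∑ j, ξ j ^ 2) ^ (-p)

lemma one_le_one_add_sum_sq {d : ℕ} (ξ : Fin d → ℝ) : 1 ≤ 1 + ∑ j, ξ j ^ 2 :=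
  le_add_of_nonneg_right (Finset.sum_nonneg fun _ _ => sq_nonneg _)

lemma besselWeight_nonneg {d : ℕ} (p : ℝ) (ξ : Fin d → ℝ) : 0 ≤ besselWeight p ξ :=
  Real.rpow_nonneg (by linarith [one_le_one_add_sum_sq ξ]) _

lemma continuous_besselWeight {d : ℕ} (p : ℝ) :
    Continuous (besselWeight p : (Fin d → ℝ) → ℝ) := by
  unfold besselWeight
  refine Continuous.rpow_const (by fun_prop) fun ξ => Or.inl ?_
  linarith [one_le_one_add_sum_sq ξ]

lemma norm_sq_le_sum_sq {d : ℕ} (ξ : Fin d → ℝ) : ‖ξ‖ ^ 2 ≤ ∑ j, ξ j ^ 2 := by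
  have h : ‖ξ‖ ≤ Real.sqrt (∑ j, ξ j ^ 2) := by
    refine (pi_norm_le_iff_of_nonneg (Real.sqrt_nonneg _)).2 fun t => ?_
    refine Real.le_sqrt_of_sq_le ?_
    rw [Real.norm_eq_abs, sq_abs]
    exact Finset.single_le_sum (f := fun j => ξ j ^ 2) (fun _ _ => sq_nonneg _) (Finset.mem_univ t)
  calc ‖ξ‖ ^ 2 ≤ Real.sqrt (∑ j, ξ j ^ 2) ^ 2 := by gcongr
    _ = _ := Real.sq_sqrt (Finset.sum_nonneg fun _ _ => sq_nonneg _)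

lemma besselWeight_le_norm {d : ℕ} {p : ℝ} (hp : 0 ≤ p) (ξ : Fin d → ℝ) :
    besselWeight p ξ ≤ (1 + ‖ξ‖ ^ 2) ^ (-p) :=
  Real.rpow_le_rpow_of_nonpos (by positivity) (by linarith [norm_sq_le_sum_sq ξ]) (by linarith)

lemma integrable_besselWeight {d : ℕ} {p : ℝ} (hp : (d : ℝ) / 2 < p) :
    Integrable (besselWeight p : (Fin d → ℝ) → ℝ) := by
  have hp0 : 0 ≤ p := le_trans (by positivity) hp.le
  have h := integrable_rpow_neg_one_add_norm_sq (E := Fin d → ℝ) (μ := volume) (r := 2 * p)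
    (by simp; linarith)
  refine h.mono' (continuous_besselWeight p).aestronglyMeasurable
    (Filter.Eventually.of_forall fun ξ => ?_)
  rw [Real.norm_of_nonneg (besselWeight_nonneg _ _)]
  convert besselWeight_le_norm hp0 ξ using 2
  ring

section ExpSum

variable {ι : Type*} [Fintype ι] {d : ℕ}

lemma continuous_expSum (y : ι → Fin d → ℝ) (b : ι → ℝ) : Continuous (expSum y b) := by
  unfold expSum
  fun_prop

lemma norm_expSum_le (y : ι → Fin d → ℝ) (b : ι → ℝ) (ξ : Fin d → ℝ) :
    ‖expSum y b ξ‖ ≤ ∑ i, |b i| := by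
  refine (norm_sum_le _ _).trans (Finset.sum_le_sum fun i _ => ?_)
  rw [norm_mul, Complex.norm_exp_ofReal_mul_I, mul_one, Complex.norm_real, Real.norm_eq_abs]

lemma integrable_norm_expSum_pow_mul (y : ι → Fin d → ℝ) (b : ι → ℝ) (m : ℕ)
    {W : (Fin d → ℝ) → ℝ} (hW : Integrable W) :
    Integrable fun ξ => ‖expSum y b ξ‖ ^ m * W ξ := by
  refine hW.bdd_mul (c := (∑ i, |b i|) ^ m)
    ((continuous_expSum y b).norm.pow m).aestronglyMeasurable
    (Filter.Eventually.of_forall fun ξ => ?_)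
  rw [norm_pow, norm_norm]
  gcongr
  exact norm_expSum_le y b ξ

lemma norm_expSum_sq (y : ι → Fin d → ℝ) (b : ι → ℝ) (ξ : Fin d → ℝ) :
    ‖expSum y b ξ‖ ^ 2 = ∑ i, ∑ j, b i * b j * Real.cos (∑ t, (y i - y j) t * ξ t) := by
  have hre : (expSum y b ξ).re = ∑ i, b i * Real.cos (∑ t, y i t * ξ t) := by
    simp [expSum, Complex.exp_ofReal_mul_I_re, -Complex.ofReal_sum, -Complex.ofReal_mul]
  have him : (expSum y b ξ).im = ∑ i, b i * Real.sin (∑ t, y i t * ξ t) := by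
    simp [expSum, Complex.exp_ofReal_mul_I_im, -Complex.ofReal_sum, -Complex.ofReal_mul]
  rw [Complex.sq_norm, Complex.normSq_apply, hre, him, Finset.sum_mul_sum, Finset.sum_mul_sum,
    ← Finset.sum_add_distrib]
  refine Finset.sum_congr rfl fun i _ => ?_
  rw [← Finset.sum_add_distrib]
  refine Finset.sum_congr rfl fun j _ => ?_
  have : ∑ t, (y i - y j) t * ξ t = (∑ t, y i t * ξ t) - ∑ t, y j t * ξ t := by
    rw [← Finset.sum_sub_distrib]
    exact Finset.sum_congr rfl fun t _ => by simp [sub_mul]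
  rw [this, Real.cos_sub]
  ring

/-- The quadratic form of the Matérn kernel in Fourier space. -/
lemma sum_mul_matern_eq_integral {α : ℝ} (hα : 0 < α) (y : ι → Fin d → ℝ) (b : ι → ℝ) :
    ∑ i, ∑ j, b i * b j * matern α d (y i - y j) =
      ∫ ξ, ‖expSum y b ξ‖ ^ 2 * besselWeight (α + (d : ℝ) / 2) ξ := by
  have hint : ∀ i j, Integrable fun ξ : Fin d → ℝ =>
      b i * b j * (Real.cos (∑ t, (y i - y j) t * ξ t) * besselWeight (α + (d : ℝ) / 2) ξ) := by
    intro i j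
    refine Integrable.const_mul ?_ _
    refine (integrable_besselWeight (by linarith)).bdd_mul (c := 1)
      (Continuous.aestronglyMeasurable (by fun_prop)) (Filter.Eventually.of_forall fun ξ => ?_)
    exact Real.abs_cos_le_one _
  simp_rw [norm_expSum_sq, Finset.sum_mul, mul_assoc (b _ * b _)]
  rw [integral_finsetSum _ fun i _ => integrable_finsetSum _ fun j _ => hint i j]
  refine Finset.sum_congr rfl fun i _ => ?_
  rw [integral_finsetSum _ fun j _ => hint i j]
  refine Finset.sum_congr rfl fun j _ => ?_
  rw [integral_const_mul]
  rfl

end ExpSum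

/-- The Cauchy–Schwarz inequality with respect to a nonnegative weight. -/
lemma sq_integral_mul_le {X : Type*} [MeasurableSpace X] {μ : Measure X} {f W : X → ℝ}
    (hW0 : ∀ x, 0 ≤ W x) (hW : Integrable W μ) (h1 : Integrable (fun x => f x * W x) μ)
    (h2 : Integrable (fun x => f x ^ 2 * W x) μ) :
    (∫ x, f x * W x ∂μ) ^ 2 ≤ (∫ x, W x ∂μ) * ∫ x, f x ^ 2 * W x ∂μ := by
  have key : ∀ c : ℝ, 0 ≤ (∫ x, W x ∂μ) * (c * c) + (-2 * ∫ x, f x * W x ∂μ) * c +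
      ∫ x, f x ^ 2 * W x ∂μ := by
    intro c
    have : 0 ≤ ∫ x, (f x - c) ^ 2 * W x ∂μ :=
      integral_nonneg fun x => mul_nonneg (sq_nonneg _) (hW0 x)
    have h3 : (fun x => (f x - c) ^ 2 * W x) =
        fun x => (f x ^ 2 * W x + (-2 * c) * (f x * W x)) + (c * c) * W x := by
      ext x; ring
    have h4 : Integrable (fun x => f x ^ 2 * W x + (-2 * c) * (f x * W x)) μ :=
      h2.add (h1.const_mul _)
    rw [h3, integral_add h4 (hW.const_mul _),
      integral_add h2 (h1.const_mul _), integral_const_mul, integral_const_mul] at this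
    linarith
  have := discrim_le_zero key
  rw [discrim] at this
  nlinarith

lemma one_add_sum_le_prod_one_add {ι : Type*} (s : Finset ι) {f : ι → ℝ} (hf : ∀ i, 0 ≤ f i) :
    1 + ∑ i ∈ s, f i ≤ ∏ i ∈ s, (1 + f i) := by
  classical
  induction s using Finset.induction_on with
  | empty => simp
  | insert a s ha ih =>
    rw [Finset.sum_insert ha, Finset.prod_insert ha]
    have h1 : 0 ≤ ∑ i ∈ s, f i := Finset.sum_nonneg fun i _ => hf i
    nlinarith [hf a, mul_nonneg (hf a) h1]

/-- On the cube `[-1, 1]^d` every monomial is a superposition of exponentials whose density is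
dominated by a Bessel potential weight. -/
lemma exists_fourier_density_mvMonomial {d : ℕ} (k : Fin d → ℕ) (N : ℕ) :
    ∃ (h : (Fin d → ℝ) → ℂ) (C : ℝ), Continuous h ∧ 0 ≤ C ∧
      (∀ ζ, ‖h ζ‖ ≤ C * besselWeight (N : ℝ) ζ) ∧
      ∀ v : Fin d → ℝ, (∀ t, |v t| ≤ 1) →
        ((∏ t, v t ^ k t : ℝ) : ℂ) =
          ∫ ζ : Fin d → ℝ, h ζ * Complex.exp ((∑ t, v t * ζ t : ℝ) * Complex.I) := by
  choose h C hcont hC hbound hrep using fun t : Fin d => exists_fourier_density_monomial (k t) N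
  refine ⟨fun ζ => ∏ t, h t (ζ t), ∏ t, C t, by fun_prop, Finset.prod_nonneg fun t _ => hC t, ?_, ?_⟩
  · intro ζ
    rw [norm_prod]
    calc ∏ t, ‖h t (ζ t)‖ ≤ ∏ t, (C t * ((1 + ζ t ^ 2) ^ N)⁻¹) :=
          Finset.prod_le_prod (fun _ _ => norm_nonneg _) fun t _ => hbound t (ζ t)
      _ = (∏ t, C t) * ((∏ t, (1 + ζ t ^ 2)) ^ N)⁻¹ := by
          rw [Finset.prod_mul_distrib, Finset.prod_inv_distrib, Finset.prod_pow]
      _ ≤ _ := by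
          rw [besselWeight, Real.rpow_neg (by linarith [one_le_one_add_sum_sq ζ]), Real.rpow_natCast]
          have h0 := one_le_one_add_sum_sq ζ
          gcongr
          · exact Finset.prod_nonneg fun t _ => hC t
          · exact one_add_sum_le_prod_one_add _ fun t => sq_nonneg (ζ t)
  · intro v hv
    have h1 : ∀ ζ : Fin d → ℝ,
        (∏ t, h t (ζ t)) * Complex.exp ((∑ t, v t * ζ t : ℝ) * Complex.I) =
          ∏ t, (h t (ζ t) * Complex.exp ((v t * ζ t : ℝ) * Complex.I)) := by
      intro ζ
      rw [Finset.prod_mul_distrib, ← Complex.exp_sum, Complex.ofReal_sum, Finset.sum_mul]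
    simp_rw [h1]
    rw [integral_fintype_prod_volume_eq_prod
      (fun t (x : ℝ) => h t x * Complex.exp ((v t * x : ℝ) * Complex.I)), Complex.ofReal_prod]
    exact Finset.prod_congr rfl fun t _ => hrep t (v t) (hv t)

/-- Moments of a finite signed measure on `[-1, 1]^d` are controlled by a weighted `L²` norm of its
Fourier transform. -/
lemma exists_sq_moment_le {d : ℕ} (k : Fin d → ℕ) {N : ℕ} (hN : (d : ℝ) / 2 < N) :
    ∃ C : ℝ, 0 ≤ C ∧ ∀ {ι : Type} [Fintype ι] (v : ι → Fin d → ℝ) (b : ι → ℝ),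
      (∀ i t, |v i t| ≤ 1) →
      (∑ i, b i * ∏ t, v i t ^ k t) ^ 2 ≤
        C * ∫ ζ, ‖expSum v b ζ‖ ^ 2 * besselWeight (N : ℝ) ζ := by
  obtain ⟨h, C, hcont, hC, hbound, hrep⟩ := exists_fourier_density_mvMonomial k N
  have hW : Integrable (besselWeight (N : ℝ) : (Fin d → ℝ) → ℝ) := integrable_besselWeight hN
  have hh : Integrable h := (hW.const_mul C).mono' hcont.aestronglyMeasurable
    (Filter.Eventually.of_forall hbound)
  refine ⟨C ^ 2 * ∫ ζ : Fin d → ℝ, besselWeight (N : ℝ) ζ,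
    mul_nonneg (sq_nonneg _) (integral_nonneg fun _ => besselWeight_nonneg _ _), ?_⟩
  intro ι _ v b hv
  have hi : ∀ i, Integrable fun ζ : Fin d → ℝ =>
      (b i : ℂ) * (h ζ * Complex.exp ((∑ t, v i t * ζ t : ℝ) * Complex.I)) := by
    intro i
    refine Integrable.const_mul (hh.mul_bdd (c := 1)
      (Continuous.aestronglyMeasurable (by fun_prop)) (Filter.Eventually.of_forall fun ζ => ?_)) _
    rw [Complex.norm_exp_ofReal_mul_I]
  have hsum : ((∑ i, b i * ∏ t, v i t ^ k t : ℝ) : ℂ) = ∫ ζ, h ζ * expSum v b ζ := by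
    have h1 : ∀ ζ, h ζ * expSum v b ζ =
        ∑ i, (b i : ℂ) * (h ζ * Complex.exp ((∑ t, v i t * ζ t : ℝ) * Complex.I)) := by
      intro ζ
      rw [expSum, Finset.mul_sum]
      exact Finset.sum_congr rfl fun i _ => by ring
    simp_rw [h1]
    rw [integral_finsetSum _ fun i _ => hi i, Complex.ofReal_sum]
    refine Finset.sum_congr rfl fun i _ => ?_
    rw [integral_const_mul, Complex.ofReal_mul, hrep (v i) (hv i)]
  have h1 := integrable_norm_expSum_pow_mul v b 1 hW
  have h2 := integrable_norm_expSum_pow_mul v b 2 hW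
  simp only [pow_one] at h1
  have habs : |∑ i, b i * ∏ t, v i t ^ k t| ≤ C * ∫ ζ, ‖expSum v b ζ‖ * besselWeight (N : ℝ) ζ := by
    rw [← Real.norm_eq_abs, ← Complex.norm_real, hsum, ← integral_const_mul]
    refine norm_integral_le_of_norm_le (h1.const_mul C) (Filter.Eventually.of_forall fun ζ => ?_)
    rw [norm_mul]
    nlinarith [mul_le_mul_of_nonneg_right (hbound ζ) (norm_nonneg (expSum v b ζ))]
  have hcs := sq_integral_mul_le (besselWeight_nonneg _) hW h1 h2
  calc (∑ i, b i * ∏ t, v i t ^ k t) ^ 2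
      ≤ (C * ∫ ζ, ‖expSum v b ζ‖ * besselWeight (N : ℝ) ζ) ^ 2 := by
        rw [← sq_abs]; gcongr
    _ = C ^ 2 * (∫ ζ, ‖expSum v b ζ‖ * besselWeight (N : ℝ) ζ) ^ 2 := by ring
    _ ≤ C ^ 2 * ((∫ ζ : Fin d → ℝ, besselWeight (N : ℝ) ζ) *
          ∫ ζ, ‖expSum v b ζ‖ ^ 2 * besselWeight (N : ℝ) ζ) := by gcongr
    _ = _ := by ring

/-- Change of variables `ζ = R ξ` in a weighted `L²` norm of an exponential sum. -/
lemma integral_norm_expSum_sq_rescale {d : ℕ} {ι : Type*} [Fintype ι] (v : ι → Fin d → ℝ)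
    (b : ι → ℝ) (p : ℝ) {R : ℝ} (hR : 0 < R) :
    ∫ ζ, ‖expSum v b ζ‖ ^ 2 * besselWeight p ζ =
      R ^ d * ∫ ξ, ‖expSum (fun i => R • v i) b ξ‖ ^ 2 * besselWeight p (R • ξ) := by
  have h := Measure.integral_comp_smul (volume : Measure (Fin d → ℝ))
    (fun ζ => ‖expSum v b ζ‖ ^ 2 * besselWeight p ζ) R
  have h1 : ∀ ξ, expSum (fun i => R • v i) b ξ = expSum v b (R • ξ) := by
    intro ξ
    simp only [expSum, Pi.smul_apply, smul_eq_mul]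
    refine Finset.sum_congr rfl fun i _ => ?_
    congr 4
    exact Finset.sum_congr rfl fun t _ => by ring
  simp_rw [h1, h]
  rw [Module.finrank_fin_fun, abs_of_pos (by positivity), smul_eq_mul, ← mul_assoc,
    mul_inv_cancel₀ (by positivity), one_mul]

/-- A signed combination of values of a polynomial with bounded coefficients is controlled, at every
scale `τ * ℓ` above the diameter of the point set, by a weighted `L²` norm of the corresponding
exponential sum. -/
lemma exists_sq_sum_eval_le {d : ℕ} (n : ℕ) {N : ℕ} (hN : (d : ℝ) / 2 < N) :
    ∃ C : ℝ, 0 ≤ C ∧ ∀ {ι : Type} [Fintype ι] (y : ι → Fin d → ℝ) (b : ι → ℝ) (ℓ τ B : ℝ),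
      0 < ℓ → 1 ≤ τ → (∀ i t, |y i t| ≤ ℓ) →
      ∀ Q : MvPolynomial (Fin d) ℝ, Q.totalDegree ≤ n → (∀ k, |Q.coeff k| ≤ B) →
      (∑ i, b i * MvPolynomial.eval (ℓ⁻¹ • y i) Q) ^ 2 ≤
        C * B ^ 2 * τ ^ (2 * n) *
          ((τ * ℓ) ^ d * ∫ ξ, ‖expSum y b ξ‖ ^ 2 * besselWeight (N : ℝ) ((τ * ℓ) • ξ)) := by
  let S : Finset (Fin d →₀ ℕ) := (Finsupp.finite_of_degree_le n).toFinset
  choose c hc hmom using fun k : Fin d →₀ ℕ => exists_sq_moment_le k hN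
  refine ⟨S.card * ∑ k ∈ S, c k,
    mul_nonneg (by positivity) (Finset.sum_nonneg fun k _ => hc k), ?_⟩
  intro ι _ y b ℓ τ B hℓ hτ hy Q hQ hB
  have hτ0 : 0 < τ := by linarith
  let v : ι → Fin d → ℝ := fun i => (τ * ℓ)⁻¹ • y i
  have hv : ∀ i t, |v i t| ≤ 1 := by
    intro i t
    simp only [v, Pi.smul_apply, smul_eq_mul, abs_mul, abs_inv, abs_of_pos hτ0, abs_of_pos hℓ]
    rw [inv_mul_le_iff₀ (by positivity), mul_one]
    nlinarith [hy i t]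
  have hI : ∫ ζ, ‖expSum v b ζ‖ ^ 2 * besselWeight (N : ℝ) ζ =
      (τ * ℓ) ^ d * ∫ ξ, ‖expSum y b ξ‖ ^ 2 * besselWeight (N : ℝ) ((τ * ℓ) • ξ) := by
    rw [integral_norm_expSum_sq_rescale v b N (mul_pos hτ0 hℓ)]
    have : (fun i => (τ * ℓ) • v i) = y := by
      ext i t
      simp only [v, smul_smul]
      rw [mul_inv_cancel₀ (by positivity), one_smul]
    rw [this]
  rw [← hI]
  set J := ∫ ζ, ‖expSum v b ζ‖ ^ 2 * besselWeight (N : ℝ) ζ with hJ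
  have hJ0 : 0 ≤ J := integral_nonneg fun _ => mul_nonneg (sq_nonneg _) (besselWeight_nonneg _ _)
  have hmem : ∀ k, k ∈ S ↔ k.degree ≤ n := fun k => by simp [S]
  have hsub : Q.support ⊆ S := by
    intro k hk
    rw [hmem]
    exact (MvPolynomial.le_totalDegree hk).trans hQ
  have hexp : ∑ i, b i * MvPolynomial.eval (ℓ⁻¹ • y i) Q =
      ∑ k ∈ S, Q.coeff k * τ ^ k.degree * ∑ i, b i * ∏ t, v i t ^ k t := by
    have h1 : ∀ i, MvPolynomial.eval (ℓ⁻¹ • y i) Q =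
        ∑ k ∈ S, Q.coeff k * (τ ^ k.degree * ∏ t, v i t ^ k t) := by
      intro i
      rw [MvPolynomial.eval_eq']
      rw [Finset.sum_subset hsub fun k _ hk => by
        rw [MvPolynomial.notMem_support_iff.1 hk, zero_mul]]
      refine Finset.sum_congr rfl fun k _ => ?_
      congr 1
      rw [Finsupp.degree_eq_sum, ← Finset.prod_pow_eq_pow_sum, ← Finset.prod_mul_distrib]
      refine Finset.prod_congr rfl fun t _ => ?_
      rw [← mul_pow]
      congr 1
      simp only [v, Pi.smul_apply, smul_eq_mul]
      field_simp
    simp_rw [h1, Finset.mul_sum]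
    rw [Finset.sum_comm]
    exact Finset.sum_congr rfl fun k _ => Finset.sum_congr rfl fun i _ => by ring
  rw [hexp]
  calc (∑ k ∈ S, Q.coeff k * τ ^ k.degree * ∑ i, b i * ∏ t, v i t ^ k t) ^ 2
      ≤ S.card * ∑ k ∈ S, (Q.coeff k * τ ^ k.degree * ∑ i, b i * ∏ t, v i t ^ k t) ^ 2 :=
        sq_sum_le_card_mul_sum_sq
    _ ≤ S.card * ∑ k ∈ S, (B ^ 2 * τ ^ (2 * n)) * (c k * J) := by
        gcongr with k hk
        rw [mul_pow, mul_pow]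
        have h1 : Q.coeff k ^ 2 ≤ B ^ 2 := by
          rw [← sq_abs]
          exact pow_le_pow_left₀ (abs_nonneg _) (hB k) 2
        have h2 : (τ ^ k.degree) ^ 2 ≤ τ ^ (2 * n) := by
          rw [← pow_mul, mul_comm]
          exact pow_le_pow_right₀ hτ (by have := (hmem k).1 hk; omega)
        have h3 := hmom k v b hv
        gcongr
    _ = _ := by
        rw [← Finset.mul_sum, ← Finset.sum_mul]
        ring

lemma card_finsupp_degree_le (d l : ℕ) :
    Nat.card {k : Fin (d + 1) →₀ ℕ // k.degree ≤ l} = (l + (d + 1)).choose l := by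
  classical
  let S : Finset (Fin (d + 1) →₀ ℕ) :=
    (Finset.range (l + 1)).biUnion fun j => Finset.finsuppAntidiag Finset.univ j
  have hS : ∀ k : Fin (d + 1) →₀ ℕ, k ∈ S ↔ k.degree ≤ l := by
    intro k
    simp [S, Finset.mem_finsuppAntidiag, Finsupp.degree_eq_sum]
  rw [Nat.card_congr (Equiv.subtypeEquivRight fun k => (hS k).symm), Nat.card_eq_fintype_card,
    Fintype.card_coe, Finset.card_biUnion]
  · simp_rw [Finset.card_finsuppAntidiag_nat_eq_choose, Finset.card_univ, Fintype.card_fin]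
    have h := Nat.sum_range_add_choose l d
    rw [add_assoc] at h
    rw [← Nat.choose_symm_add] at h
    rw [← h]
    refine Finset.sum_congr rfl fun j _ => ?_
    rw [show d + 1 + j - 1 = j + d by omega, Nat.choose_symm_add]
  · intro i _ j _ hij
    rw [Function.onFun, Finset.disjoint_left]
    intro k hi hj
    rw [Finset.mem_finsuppAntidiag] at hi hj
    exact hij (hi.1.symm.trans hj.1)

lemma finrank_restrictTotalDegree {d : ℕ} (hd : 1 ≤ d) (l : ℕ) :
    Module.finrank ℝ (MvPolynomial.restrictTotalDegree (Fin d) ℝ l) = (l + d).choose l := by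
  obtain ⟨e, rfl⟩ : ∃ e, d = e + 1 := ⟨d - 1, by omega⟩
  rw [← card_finsupp_degree_le]
  exact Module.finrank_eq_nat_card_basis
    (MvPolynomial.basisRestrictSupport ℝ {k : Fin (e + 1) →₀ ℕ | (k.sum fun _ e => e) ≤ l})

/-- Polynomials whose values on a nondegenerate axis-parallel cube containing the origin are
bounded have bounded coefficients. -/
lemma exists_abs_coeff_le (d n : ℕ) {δ : ℝ} (hδ : 0 < δ) :
    ∃ C : ℝ, 0 ≤ C ∧ ∀ (z : Fin d → ℝ) (s B : ℝ), δ ≤ s → 0 ∈ cube d z s →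
      ∀ P : MvPolynomial (Fin d) ℝ, P.totalDegree ≤ n →
        (∀ u ∈ cube d z s, |MvPolynomial.eval u P| ≤ B) → ∀ k, |P.coeff k| ≤ C * B := by
  classical
  let V := MvPolynomial.restrictTotalDegree (Fin d) ℝ n
  let G : Type := Fin d → Fin (n + 1)
  let pt (σ : Fin d → Bool) (g : G) : Fin d → ℝ := fun t =>
    (if σ t then 1 else -1) * (δ / 2 * ((g t : ℕ) / ((n : ℝ) + 1)))
  let ev (σ : Fin d → Bool) (g : G) : V →ₗ[ℝ] ℝ :=
    (MvPolynomial.aeval (pt σ g)).toLinearMap ∘ₗ V.subtype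
  let co (k : Fin d →₀ ℕ) : V →ₗ[ℝ] ℝ := (MvPolynomial.lcoeff ℝ k) ∘ₗ V.subtype
  have hev : ∀ σ g (P : V), ev σ g P = MvPolynomial.eval (pt σ g) (P : MvPolynomial (Fin d) ℝ) := by
    intro σ g P
    simp [ev, MvPolynomial.aeval_eq_eval]
  have hsep : ∀ σ (P : V), (∀ g, ev σ g P = 0) → P = 0 := by
    intro σ P hP
    apply Subtype.ext
    refine MvPolynomial.eq_zero_of_eval_zero_at_prod_finset (P : MvPolynomial (Fin d) ℝ)
      (fun t => Finset.univ.image fun j : Fin (n + 1) =>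
        (if σ t then 1 else -1) * (δ / 2 * ((j : ℕ) / ((n : ℝ) + 1)))) ?_ ?_
    · intro t
      rw [Finset.card_image_of_injective, Finset.card_univ, Fintype.card_fin, Nat.lt_succ_iff]
      · exact (MvPolynomial.degreeOf_le_totalDegree _ t).trans
          ((MvPolynomial.mem_restrictTotalDegree _ _ _).1 P.2)
      · intro i j hij
        have h1 : (if σ t then (1 : ℝ) else -1) ≠ 0 := by split_ifs <;> norm_num
        have h2 := mul_left_cancel₀ (by positivity) (mul_left_cancel₀ h1 hij)
        rw [div_left_inj' (by positivity)] at h2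
        exact Fin.ext (by exact_mod_cast h2)
    · intro x hx
      simp only [Finset.mem_image, Finset.mem_univ, true_and] at hx
      choose g hg using hx
      have := hP g
      rw [hev] at this
      rwa [show pt σ g = x from funext hg] at this
  have hspan : ∀ σ k, ∃ c : G → ℝ, ∀ P : V, co k P = ∑ g, c g * ev σ g P := by
    intro σ k
    have h1 : co k ∈ Submodule.span ℝ (Set.range (ev σ)) := by
      refine mem_span_of_iInf_ker_le_ker fun P hP => ?_
      rw [Submodule.mem_iInf] at hP
      rw [hsep σ P fun g => LinearMap.mem_ker.1 (hP g)]
      simp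
    obtain ⟨c, hc⟩ := (Submodule.mem_span_range_iff_exists_fun ℝ).1 h1
    exact ⟨c, fun P => by rw [← hc]; simp⟩
  choose c hc using hspan
  let S : Finset (Fin d →₀ ℕ) := (Finsupp.finite_of_degree_le n).toFinset
  refine ⟨∑ k ∈ S, ∑ σ, ∑ g, |c σ k g|, by positivity, ?_⟩
  intro z s B hs h0 P hP hB k
  have hB0 : 0 ≤ B := (abs_nonneg _).trans (hB 0 h0)
  by_cases hk : k.degree ≤ n
  swap
  · have : P.coeff k = 0 := by
      by_contra hne
      exact hk ((MvPolynomial.le_totalDegree (MvPolynomial.mem_support_iff.2 hne)).trans hP)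
    rw [this, abs_zero]
    positivity
  let σ : Fin d → Bool := fun t => decide (δ / 2 ≤ z t + s)
  have hpt : ∀ g, pt σ g ∈ cube d z s := by
    intro g t
    have h1 := h0 t
    simp only [Pi.zero_apply] at h1
    have h2 : (0 : ℝ) ≤ (g t : ℕ) / ((n : ℝ) + 1) := by positivity
    have h3 : ((g t : ℕ) : ℝ) / ((n : ℝ) + 1) ≤ 1 := by
      rw [div_le_one (by positivity)]
      exact_mod_cast (g t).2.le
    simp only [pt, σ, decide_eq_true_eq]
    split_ifs with h
    · constructor <;> nlinarith
    · constructor <;> nlinarith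
  let P' : V := ⟨P, (MvPolynomial.mem_restrictTotalDegree _ _ _).2 hP⟩
  have h1 : P.coeff k = ∑ g, c σ k g * MvPolynomial.eval (pt σ g) P := by
    have := hc σ k P'
    simp_rw [hev] at this
    exact this
  rw [h1]
  calc |∑ g, c σ k g * MvPolynomial.eval (pt σ g) P| ≤ ∑ g, |c σ k g| * B := by
        refine (Finset.abs_sum_le_sum_abs _ _).trans (Finset.sum_le_sum fun g _ => ?_)
        rw [abs_mul]
        exact mul_le_mul_of_nonneg_left (hB _ (hpt g)) (abs_nonneg _)
    _ = (∑ g, |c σ k g|) * B := by rw [Finset.sum_mul]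
    _ ≤ _ := by
        gcongr
        have h2 : ∑ g, |c σ k g| ≤ ∑ σ, ∑ g, |c σ k g| :=
          Finset.single_le_sum (f := fun σ => ∑ g, |c σ k g|) (fun _ _ => by positivity)
            (Finset.mem_univ σ)
        refine h2.trans ?_
        exact Finset.single_le_sum (f := fun k => ∑ σ, ∑ g, |c σ k g|) (fun _ _ => by positivity)
          (by simpa [S] using hk)

lemma totalDegree_aeval_le_of_affine {d : ℕ} (P : MvPolynomial (Fin d) ℝ)
    (f : Fin d → MvPolynomial (Fin d) ℝ) (hf : ∀ t, (f t).totalDegree ≤ 1) :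
    (MvPolynomial.aeval f P).totalDegree ≤ P.totalDegree := by
  rw [MvPolynomial.aeval_def, MvPolynomial.eval₂_eq']
  refine MvPolynomial.totalDegree_finsetSum_le fun k hk => ?_
  have h1 : (∏ t, f t ^ k t).totalDegree ≤ ∑ t, k t := by
    refine (MvPolynomial.totalDegree_finsetProd _ _).trans (Finset.sum_le_sum fun t _ => ?_)
    refine (MvPolynomial.totalDegree_pow _ _).trans ?_
    exact (Nat.mul_le_mul_left _ (hf t)).trans (by omega)
  have h2 : ∑ t, k t ≤ P.totalDegree := by
    have := MvPolynomial.le_totalDegree hk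
    rwa [Finsupp.sum_fintype _ _ fun _ => rfl] at this
  refine (MvPolynomial.totalDegree_mul _ _).trans ?_
  rw [MvPolynomial.algebraMap_eq, MvPolynomial.totalDegree_C, zero_add]
  exact h1.trans h2

/-- Norming sets are invariant under translations and dilations. -/
lemma IsNorming.rescale {d l m : ℕ} {z : Fin d → ℝ} {s c : ℝ} {w : Fin m → Fin d → ℝ}
    (h : IsNorming l (cube d z s) w c) (x : Fin d → ℝ) {ℓ : ℝ} (hℓ : 0 < ℓ) :
    IsNorming l (cube d (ℓ⁻¹ • (z - x)) (ℓ⁻¹ * s)) (fun i => ℓ⁻¹ • (w i - x)) c := by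
  intro P hP u hu
  let f : Fin d → MvPolynomial (Fin d) ℝ := fun t =>
    MvPolynomial.C ℓ⁻¹ * (MvPolynomial.X t - MvPolynomial.C (x t))
  have hf : ∀ t, (f t).totalDegree ≤ 1 := by
    intro t
    refine (MvPolynomial.totalDegree_mul _ _).trans ?_
    rw [MvPolynomial.totalDegree_C, zero_add]
    refine (MvPolynomial.totalDegree_sub _ _).trans ?_
    simp
  have heval : ∀ y : Fin d → ℝ, MvPolynomial.eval y (MvPolynomial.aeval f P) =
      MvPolynomial.eval (ℓ⁻¹ • (y - x)) P := by
    intro y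
    rw [← MvPolynomial.bind₁, MvPolynomial.eval, MvPolynomial.eval₂Hom_bind₁]
    congr 2
    ext t
    simp [f]
  have hmem : x + ℓ • u ∈ cube d z s := by
    intro t
    have h1 := hu t
    simp only [Pi.smul_apply, Pi.sub_apply, smul_eq_mul] at h1
    simp only [Pi.add_apply, Pi.smul_apply, smul_eq_mul]
    have h2 : ℓ * (ℓ⁻¹ * (z t - x t)) = z t - x t := by field_simp
    have h3 : ℓ * (ℓ⁻¹ * s) = s := by field_simp
    have h4 := mul_le_mul_of_nonneg_left h1.1 hℓ.le
    have h5 := mul_le_mul_of_nonneg_left h1.2 hℓ.le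
    rw [mul_add] at h5
    constructor <;> linarith
  have key := h (MvPolynomial.aeval f P) ((totalDegree_aeval_le_of_affine P f hf).trans hP) _ hmem
  simp_rw [heval] at key
  rwa [add_sub_cancel_left, smul_smul, inv_mul_cancel₀ hℓ.ne', one_smul] at key

lemma IsNorming.eval_eq_zero {d l m : ℕ} {Ω : Set (Fin d → ℝ)} {c : ℝ} {w : Fin m → Fin d → ℝ}
    (h : IsNorming l Ω w c) {P : MvPolynomial (Fin d) ℝ} (hP : P.totalDegree ≤ l)
    (h0 : ∀ i, MvPolynomial.eval (w i) P = 0) {u : Fin d → ℝ} (hu : u ∈ Ω) :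
    MvPolynomial.eval u P = 0 := by
  have := h P hP u hu
  simpa [h0] using this

/-- A norming set of minimal cardinality admits a bounded Lagrange basis. -/
lemma IsNorming.exists_lagrange {d l : ℕ} (hd : 1 ≤ d) {z : Fin d → ℝ} {s c : ℝ} (hs : 0 < s)
    (hc : 0 < c) {w : Fin ((l + d).choose l) → Fin d → ℝ} (h : IsNorming l (cube d z s) w c) :
    ∃ e : Fin ((l + d).choose l) → MvPolynomial (Fin d) ℝ,
      (∀ i, (e i).totalDegree ≤ l) ∧
      (∀ i j, MvPolynomial.eval (w j) (e i) = if i = j then 1 else 0) ∧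
      (∀ i, ∀ u ∈ cube d z s, |MvPolynomial.eval u (e i)| ≤ c) ∧
      ∀ P : MvPolynomial (Fin d) ℝ, P.totalDegree ≤ l → ∀ u ∈ cube d z s,
        MvPolynomial.eval u P = ∑ i, MvPolynomial.eval u (e i) * MvPolynomial.eval (w i) P := by
  let V := MvPolynomial.restrictTotalDegree (Fin d) ℝ l
  let ev : V →ₗ[ℝ] (Fin ((l + d).choose l) → ℝ) :=
    LinearMap.pi fun i => (MvPolynomial.aeval (w i)).toLinearMap ∘ₗ V.subtype
  have hev : ∀ (P : V) i, ev P i = MvPolynomial.eval (w i) (P : MvPolynomial (Fin d) ℝ) := by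
    intro P i
    simp [ev, MvPolynomial.aeval_eq_eval]
  have hinj : Function.Injective ev := by
    rw [← LinearMap.ker_eq_bot, LinearMap.ker_eq_bot']
    intro P hP
    apply Subtype.ext
    refine MvPolynomial.funext_set (fun t => Set.Icc (z t) (z t + s))
      (fun t => Set.Icc_infinite (by linarith)) fun u hu => ?_
    rw [Submodule.coe_zero, map_zero]
    refine h.eval_eq_zero ((MvPolynomial.mem_restrictTotalDegree _ _ _).1 P.2) (fun i => ?_)
      fun t => hu t trivial
    rw [← hev, hP, Pi.zero_apply]
  have hsurj : Function.Surjective ev := by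
    refine (LinearMap.injective_iff_surjective_of_finrank_eq_finrank ?_).1 hinj
    rw [finrank_restrictTotalDegree hd, Module.finrank_fin_fun]
  choose e he using fun i => hsurj (Pi.single i 1)
  have hdeg : ∀ i, (e i : MvPolynomial (Fin d) ℝ).totalDegree ≤ l := fun i =>
    (MvPolynomial.mem_restrictTotalDegree _ _ _).1 (e i).2
  have hval : ∀ i j, MvPolynomial.eval (w j) (e i : MvPolynomial (Fin d) ℝ) =
      if i = j then 1 else 0 := by
    intro i j
    rw [← hev, he, Pi.single_apply]
    simp only [eq_comm]
  refine ⟨fun i => e i, hdeg, hval, ?_, ?_⟩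
  · intro i u hu
    refine (h _ (hdeg i) u hu).trans ?_
    refine mul_le_of_le_one_right hc.le (Real.iSup_le (fun j => ?_) zero_le_one)
    rw [hval]
    split_ifs <;> simp
  · intro P hP u hu
    have h1 := h.eval_eq_zero
      (P := P - ∑ i, MvPolynomial.C (MvPolynomial.eval (w i) P) * (e i : MvPolynomial (Fin d) ℝ))
      ?_ ?_ hu
    · rw [map_sub, map_sum, sub_eq_zero] at h1
      rw [h1]
      exact Finset.sum_congr rfl fun i _ => by simp [mul_comm]
    · refine (MvPolynomial.totalDegree_sub _ _).trans (max_le hP ?_)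
      refine MvPolynomial.totalDegree_finsetSum_le fun i _ => ?_
      refine (MvPolynomial.totalDegree_mul _ _).trans ?_
      rw [MvPolynomial.totalDegree_C, zero_add]
      exact hdeg i
    · intro j
      simp [hval]

/-- The polynomial data attached to a point configuration, in coordinates centred at `x` and
rescaled by `cL * L`: a Lagrange basis bounded at the origin, and a polynomial of one degree more
with bounded coefficients which separates the origin from the configuration. -/
lemma exists_polynomials_of_geomHyp (α : ℝ) {d : ℕ} (hd : 1 ≤ d) {cL cd cN : ℝ} (hcd : 0 < cd)
    (hcLcd : cd ≤ cL) (hcN : 0 < cN) :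
    ∃ B : ℝ, ∀ L : ℝ, 0 < L → ∀ (x : Fin d → ℝ)
      (w : Fin ((lbelow α + d).choose (lbelow α)) → Fin d → ℝ), GeomHyp α d cL cd cN L w x →
      (∀ i t, |(w i - x) t| ≤ cL * L) ∧
      (∃ e : Fin ((lbelow α + d).choose (lbelow α)) → MvPolynomial (Fin d) ℝ,
        (∀ i, (e i).totalDegree ≤ lbelow α) ∧
        (∀ i j, MvPolynomial.eval ((cL * L)⁻¹ • (w j - x)) (e i) = if i = j then 1 else 0) ∧
        (∀ i, |MvPolynomial.eval 0 (e i)| ≤ cN) ∧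
        ∀ P : MvPolynomial (Fin d) ℝ, P.totalDegree ≤ lbelow α → MvPolynomial.eval 0 P =
          ∑ i, MvPolynomial.eval 0 (e i) * MvPolynomial.eval ((cL * L)⁻¹ • (w i - x)) P) ∧
      ∃ Q : MvPolynomial (Fin d) ℝ, Q.totalDegree ≤ lbelow α + 1 ∧
        (∀ i, MvPolynomial.eval ((cL * L)⁻¹ • (w i - x)) Q = 0) ∧
        MvPolynomial.eval 0 Q = 1 ∧ ∀ k, |Q.coeff k| ≤ B := by
  have hcL : 0 < cL := hcd.trans_le hcLcd
  obtain ⟨C, hC, hcoeff⟩ := exists_abs_coeff_le d (lbelow α + 1) (div_pos hcd hcL)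
  set l := lbelow α with hl
  have hm : 0 < (l + d).choose l := Nat.choose_pos (by omega)
  set m := (l + d).choose l with hm_def
  refine ⟨C * (m * (cL / cd) * (cN * 2)), ?_⟩
  rintro L hL x w ⟨z, s, hs0, hsL, hw, hx, -, hsep, hnorm⟩
  have hℓ : 0 < cL * L := mul_pos hcL hL
  set ℓ := cL * L with hℓ_def
  have hbox : ∀ i t, |(w i - x) t| ≤ s := by
    intro i t
    have h1 := hw i t
    have h2 := hx t
    rw [Pi.sub_apply, abs_le]
    constructor <;> linarith
  have hs : cd * L ≤ s := by
    obtain ⟨t, ht⟩ := hsep ⟨0, hm⟩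
    exact ht.trans (hbox _ t)
  have hspos : 0 < s := lt_of_lt_of_le (mul_pos hcd hL) hs
  have hnorm' := hnorm.rescale x hℓ
  have hs' : 0 < ℓ⁻¹ * s := by positivity
  have h0 : (0 : Fin d → ℝ) ∈ cube d (ℓ⁻¹ • (z - x)) (ℓ⁻¹ * s) := by
    intro t
    have h2 := hx t
    simp only [Pi.zero_apply, Pi.smul_apply, Pi.sub_apply, smul_eq_mul, ← mul_add]
    have : 0 < ℓ⁻¹ := by positivity
    constructor <;> nlinarith
  have hside : ℓ⁻¹ * s ≤ 1 := by
    rw [inv_mul_le_iff₀ hℓ, mul_one]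
    exact hsL
  have hside' : cd / cL ≤ ℓ⁻¹ * s := by
    rw [div_le_iff₀ hcL, hℓ_def]
    calc cd = (cL * L)⁻¹ * (cd * L) * cL := by field_simp
      _ ≤ _ := by gcongr
  obtain ⟨e, hdeg, hval, hbd, hrep⟩ := hnorm'.exists_lagrange hd hs' hcN
  refine ⟨fun i t => (hbox i t).trans hsL, ⟨e, hdeg, fun i j => hval i j, fun i => hbd i 0 h0,
    fun P hP => hrep P hP 0 h0⟩, ?_⟩
  obtain ⟨i, hi⟩ : ∃ i, 1 / (m : ℝ) ≤ |MvPolynomial.eval 0 (e i)| := by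
    have h1 := hrep 1 (by simp) 0 h0
    simp only [map_one, mul_one] at h1
    by_contra! hlt
    have h2 : ∑ i, |MvPolynomial.eval (0 : Fin d → ℝ) (e i)| < ∑ _i : Fin m, 1 / (m : ℝ) :=
      Finset.sum_lt_sum_of_nonempty ⟨⟨0, hm⟩, Finset.mem_univ _⟩ fun i _ => hlt i
    rw [Finset.sum_const, Finset.card_univ, Fintype.card_fin, nsmul_eq_mul,
      mul_one_div_cancel (by positivity)] at h2
    have h3 := Finset.abs_sum_le_sum_abs (fun i => MvPolynomial.eval (0 : Fin d → ℝ) (e i))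
      Finset.univ
    rw [← h1, abs_one] at h3
    linarith
  obtain ⟨t, ht⟩ := hsep i
  set a : ℝ := (ℓ⁻¹ • (w i - x)) t with ha
  have ha1 : |a| ≤ 1 := by
    rw [ha, Pi.smul_apply, smul_eq_mul, abs_mul, abs_of_pos (inv_pos.2 hℓ), inv_mul_le_iff₀ hℓ,
      mul_one]
    exact (hbox i t).trans hsL
  have ha2 : cd / cL ≤ |a| := by
    rw [ha, Pi.smul_apply, smul_eq_mul, abs_mul, abs_of_pos (inv_pos.2 hℓ), div_le_iff₀ hcL]
    calc cd = (cL * L)⁻¹ * (cd * L) * cL := by field_simp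
      _ ≤ _ := by gcongr; exact ht
  set q : ℝ := MvPolynomial.eval 0 (e i) with hq
  have hq0 : 0 < |q| := lt_of_lt_of_le (by positivity) hi
  have ha0 : 0 < |a| := lt_of_lt_of_le (by positivity) ha2
  have hinv : |(q * -a)⁻¹| ≤ m * (cL / cd) := by
    rw [abs_inv, abs_mul, abs_neg, mul_inv]
    have h1 : |q|⁻¹ ≤ m := by
      rw [inv_le_comm₀ hq0 (by positivity)]
      simpa using hi
    have h2 : |a|⁻¹ ≤ cL / cd := by
      rw [inv_le_comm₀ ha0 (by positivity), inv_div]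
      exact ha2
    gcongr
  let Q : MvPolynomial (Fin d) ℝ :=
    MvPolynomial.C (q * -a)⁻¹ * (e i * (MvPolynomial.X t - MvPolynomial.C a))
  have hQeval : ∀ u, MvPolynomial.eval u Q =
      (q * -a)⁻¹ * (MvPolynomial.eval u (e i) * (u t - a)) := by
    intro u
    simp [Q]
  have hQdeg : Q.totalDegree ≤ l + 1 := by
    refine (MvPolynomial.totalDegree_mul _ _).trans ?_
    rw [MvPolynomial.totalDegree_C, zero_add]
    refine (MvPolynomial.totalDegree_mul _ _).trans (add_le_add (hdeg i) ?_)
    refine (MvPolynomial.totalDegree_sub _ _).trans ?_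
    simp
  refine ⟨Q, hQdeg, ?_, ?_, ?_⟩
  · intro j
    rw [hQeval, hval]
    split_ifs with hij
    · subst hij
      rw [← ha]
      simp
    · simp
  · rw [hQeval, Pi.zero_apply, zero_sub, ← hq]
    exact inv_mul_cancel₀ (mul_ne_zero (abs_pos.1 hq0) (neg_ne_zero.2 (abs_pos.1 ha0)))
  · refine hcoeff _ _ _ hside' h0 Q hQdeg fun u hu => ?_
    rw [hQeval, abs_mul, abs_mul]
    have h1 : |u t - a| ≤ 2 := by
      have h2 := hu t
      have h3 := h0 t
      rw [Pi.zero_apply] at h3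
      have h4 := abs_le.1 ha1
      rw [abs_le]
      constructor <;> linarith
    have h2 := hbd i u hu
    gcongr

lemma sum_smul_sq {d : ℕ} (R : ℝ) (ξ : Fin d → ℝ) :
    ∑ j, (R • ξ) j ^ 2 = R ^ 2 * ∑ j, ξ j ^ 2 := by
  rw [Finset.mul_sum]
  exact Finset.sum_congr rfl fun j _ => by simp [mul_pow]

lemma rpow_mul_besselWeight_smul_le {d : ℕ} {R c p q : ℝ} (hR : 0 < R) (hRc : R ≤ c) (hp : 0 ≤ p)
    (hpq : p ≤ q) (ξ : Fin d → ℝ) :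
    R ^ (2 * p) * besselWeight q (R • ξ) ≤ (1 + c ^ 2) ^ p * besselWeight p ξ := by
  simp only [besselWeight, sum_smul_sq]
  have hs : 0 ≤ ∑ j, ξ j ^ 2 := Finset.sum_nonneg fun _ _ => sq_nonneg _
  set s := ∑ j, ξ j ^ 2
  have hRs : 0 ≤ R ^ 2 * s := by positivity
  have hRc2 : R ^ 2 ≤ c ^ 2 := by gcongr
  have h1 : (1 + R ^ 2 * s) ^ (-q) ≤ (1 + R ^ 2 * s) ^ (-p) :=
    Real.rpow_le_rpow_of_exponent_le (by linarith) (by linarith)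
  refine (mul_le_mul_of_nonneg_left h1 (by positivity)).trans ?_
  rw [Real.rpow_neg (by positivity), Real.rpow_neg (by positivity), ← div_eq_mul_inv,
    ← div_eq_mul_inv, div_le_div_iff₀ (by positivity) (by positivity), Real.rpow_mul hR.le,
    ← Real.mul_rpow (by positivity) (by positivity),
    ← Real.mul_rpow (by positivity) (by positivity)]
  refine Real.rpow_le_rpow (by positivity) ?_ hp
  rw [Real.rpow_two]
  nlinarith [mul_nonneg (sq_nonneg c) hRs]

lemma pow_div_le_telescope {n e : ℕ} {t : ℝ} (ht : 0 < t) :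
    t ^ (2 * n + (e + 1)) / (1 + t ^ 2) ^ (n + (e + 1)) ≤
      6 * (2 * t / (1 + 2 * t) - t / (1 + t)) := by
  have h1 : t ^ (2 * n + e) ≤ (1 + t ^ 2) ^ (n + e) := by
    rw [pow_add, pow_add, pow_mul]
    gcongr
    · linarith
    · nlinarith [sq_nonneg (t - 1)]
  have h2 : t ^ (2 * n + (e + 1)) / (1 + t ^ 2) ^ (n + (e + 1)) ≤ t / (1 + t ^ 2) := by
    rw [div_le_div_iff₀ (by positivity) (by positivity), ← add_assoc, ← add_assoc,
      pow_succ t (2 * n + e), pow_succ (1 + t ^ 2) (n + e)]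
    have : 0 ≤ t * (1 + t ^ 2) := by positivity
    nlinarith [mul_le_mul_of_nonneg_right h1 this]
  refine h2.trans ?_
  have h3 : 2 * t / (1 + 2 * t) - t / (1 + t) = t / ((1 + 2 * t) * (1 + t)) := by
    field_simp
    ring
  rw [h3, ← mul_div_assoc, div_le_div_iff₀ (by positivity) (by positivity)]
  nlinarith [sq_nonneg (t - 1), mul_pos ht ht, mul_nonneg ht.le (sq_nonneg (t - 1))]

/-- Summing rescaled Bessel weights over dyadic scales costs only a constant factor. -/
lemma sum_dyadic_besselWeight_le {d : ℕ} (hd : 1 ≤ d) (n J : ℕ) {ℓ c : ℝ} (hℓ : 0 < ℓ)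
    (hJ : ∀ j < J, 2 ^ j * ℓ ≤ c) (ξ : Fin d → ℝ) :
    ∑ j ∈ Finset.range J,
        (2 ^ j * ℓ) ^ (2 * n + d) * besselWeight ((n + d : ℕ) : ℝ) ((2 ^ j * ℓ) • ξ) ≤
      6 * (1 + c ^ 2) ^ (n + d) * besselWeight ((n : ℝ) + (d : ℝ) / 2) ξ := by
  obtain ⟨e, rfl⟩ : ∃ e, d = e + 1 := ⟨d - 1, by omega⟩
  have hX : 0 < 1 + ∑ j, ξ j ^ 2 := by linarith [one_le_one_add_sum_sq ξ]
  have hs : 0 ≤ ∑ j, ξ j ^ 2 := by linarith [one_le_one_add_sum_sq ξ]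
  set s := ∑ j, ξ j ^ 2 with hs_def
  set r := Real.sqrt (1 + s) with hr
  have hr0 : 0 < r := Real.sqrt_pos.2 hX
  have hr2 : r ^ 2 = 1 + s := Real.sq_sqrt hX.le
  have hw : besselWeight ((n : ℝ) + ((e + 1 : ℕ) : ℝ) / 2) ξ = (r ^ (2 * n + (e + 1)))⁻¹ := by
    rw [besselWeight, ← hs_def, ← hr2, Real.rpow_neg (by positivity), ← Real.rpow_natCast,
      ← Real.rpow_natCast, ← Real.rpow_mul hr0.le]
    congr 2
    push_cast
    ring
  have hterm : ∀ j ∈ Finset.range J, (2 ^ j * ℓ) ^ (2 * n + (e + 1)) *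
      besselWeight ((n + (e + 1) : ℕ) : ℝ) ((2 ^ j * ℓ) • ξ) ≤
      (6 * (1 + c ^ 2) ^ (n + (e + 1)) * (r ^ (2 * n + (e + 1)))⁻¹) *
        (2 ^ (j + 1) * ℓ * r / (1 + 2 ^ (j + 1) * ℓ * r) - 2 ^ j * ℓ * r / (1 + 2 ^ j * ℓ * r)) := by
    intro j hj
    have hR : 0 < 2 ^ j * ℓ := by positivity
    have hRc := hJ j (Finset.mem_range.1 hj)
    have hexp : (2 : ℝ) ^ (j + 1) * ℓ * r = 2 * (2 ^ j * ℓ * r) := by ring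
    rw [hexp]
    set R := 2 ^ j * ℓ
    have hRc2 : R ^ 2 ≤ c ^ 2 := by gcongr
    have hRs : 0 ≤ R ^ 2 * s := by positivity
    rw [besselWeight, sum_smul_sq, ← hs_def, Real.rpow_neg (by positivity), Real.rpow_natCast]
    have h1 : (1 + (R * r) ^ 2) / (1 + c ^ 2) ≤ 1 + R ^ 2 * s := by
      rw [div_le_iff₀ (by positivity), mul_pow, hr2]
      nlinarith [mul_nonneg (sq_nonneg c) hRs]
    have h2 : ((1 + R ^ 2 * s) ^ (n + (e + 1)))⁻¹ ≤
        (((1 + (R * r) ^ 2) / (1 + c ^ 2)) ^ (n + (e + 1)))⁻¹ := by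
      gcongr
    refine (mul_le_mul_of_nonneg_left h2 (by positivity)).trans ?_
    have h3 := pow_div_le_telescope (n := n) (e := e) (mul_pos hR hr0)
    calc R ^ (2 * n + (e + 1)) * (((1 + (R * r) ^ 2) / (1 + c ^ 2)) ^ (n + (e + 1)))⁻¹
        = (1 + c ^ 2) ^ (n + (e + 1)) * (r ^ (2 * n + (e + 1)))⁻¹ *
            ((R * r) ^ (2 * n + (e + 1)) / (1 + (R * r) ^ 2) ^ (n + (e + 1))) := by
          rw [div_pow, mul_pow R r (2 * n + (e + 1))]
          field_simp
      _ ≤ (1 + c ^ 2) ^ (n + (e + 1)) * (r ^ (2 * n + (e + 1)))⁻¹ *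
            (6 * (2 * (R * r) / (1 + 2 * (R * r)) - R * r / (1 + R * r))) := by gcongr
      _ = _ := by ring
  refine (Finset.sum_le_sum hterm).trans ?_
  rw [← Finset.mul_sum, hw,
    Finset.sum_range_sub (fun j : ℕ => 2 ^ j * ℓ * r / (1 + 2 ^ j * ℓ * r)) J]
  refine mul_le_of_le_one_right (by positivity) ?_
  have h1 : 2 ^ J * ℓ * r / (1 + 2 ^ J * ℓ * r) ≤ 1 := by
    rw [div_le_one (by positivity)]
    linarith
  have h2 : 0 ≤ 2 ^ 0 * ℓ * r / (1 + 2 ^ 0 * ℓ * r) := by positivity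
  linarith

/-- Values of `Q` are controlled by the Matérn energy of the coefficients at a single scale. -/
lemma exists_rpow_mul_sq_sum_eval_le {d : ℕ} (hd : 1 ≤ d) {α : ℝ} (hα : 0 < α) {n : ℕ} (hn : α ≤ n)
    (c : ℝ) :
    ∃ D : ℝ, 0 ≤ D ∧ ∀ {ι : Type} [Fintype ι] (y : ι → Fin d → ℝ) (b : ι → ℝ) (ℓ B : ℝ),
      0 < ℓ → ℓ ≤ c → (∀ i t, |y i t| ≤ ℓ) →
      ∀ Q : MvPolynomial (Fin d) ℝ, Q.totalDegree ≤ n → (∀ k, |Q.coeff k| ≤ B) →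
      ℓ ^ (2 * α) * (∑ i, b i * MvPolynomial.eval (ℓ⁻¹ • y i) Q) ^ 2 ≤
        D * B ^ 2 * ∫ ξ, ‖expSum y b ξ‖ ^ 2 * besselWeight (α + (d : ℝ) / 2) ξ := by
  have hd' : (1 : ℝ) ≤ d := by exact_mod_cast hd
  have hN : (d : ℝ) / 2 < (n + d : ℕ) := by
    push_cast
    linarith
  obtain ⟨C, hC, h⟩ := exists_sq_sum_eval_le (d := d) n hN
  refine ⟨C * (1 + c ^ 2) ^ (α + (d : ℝ) / 2), by positivity, ?_⟩
  intro ι _ y b ℓ B hℓ hℓc hy Q hQ hB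
  have h1 := h y b ℓ 1 B hℓ le_rfl hy Q hQ hB
  rw [one_pow, mul_one, one_mul] at h1
  have hpow : ℓ ^ (2 * α) * ℓ ^ d = ℓ ^ (2 * (α + (d : ℝ) / 2)) := by
    rw [← Real.rpow_natCast ℓ d, ← Real.rpow_add hℓ]
    congr 1
    ring
  have hint : ℓ ^ (2 * (α + (d : ℝ) / 2)) *
        ∫ ξ, ‖expSum y b ξ‖ ^ 2 * besselWeight ((n + d : ℕ) : ℝ) (ℓ • ξ) ≤
      (1 + c ^ 2) ^ (α + (d : ℝ) / 2) *
        ∫ ξ, ‖expSum y b ξ‖ ^ 2 * besselWeight (α + (d : ℝ) / 2) ξ := by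
    rw [← integral_const_mul, ← integral_const_mul]
    refine integral_mono
      ((integrable_norm_expSum_pow_mul y b 2
        ((integrable_besselWeight hN).comp_smul hℓ.ne')).const_mul _)
      ((integrable_norm_expSum_pow_mul y b 2
        (integrable_besselWeight (by linarith))).const_mul _) fun ξ => ?_
    have h2 := rpow_mul_besselWeight_smul_le (p := α + (d : ℝ) / 2) (q := ((n + d : ℕ) : ℝ))
      hℓ hℓc (by positivity) (by push_cast; linarith) ξ
    have h3 := mul_le_mul_of_nonneg_left h2 (sq_nonneg ‖expSum y b ξ‖)
    dsimp only
    linarith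
  calc ℓ ^ (2 * α) * (∑ i, b i * MvPolynomial.eval (ℓ⁻¹ • y i) Q) ^ 2
      ≤ ℓ ^ (2 * α) * (C * B ^ 2 *
          (ℓ ^ d * ∫ ξ, ‖expSum y b ξ‖ ^ 2 * besselWeight ((n + d : ℕ) : ℝ) (ℓ • ξ))) := by
        gcongr
    _ = C * B ^ 2 * (ℓ ^ (2 * (α + (d : ℝ) / 2)) *
          ∫ ξ, ‖expSum y b ξ‖ ^ 2 * besselWeight ((n + d : ℕ) : ℝ) (ℓ • ξ)) := by
        rw [← hpow]
        ring
    _ ≤ _ := by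
        refine (mul_le_mul_of_nonneg_left hint (by positivity)).trans_eq ?_
        ring

/-- For integer regularity every dyadic scale contributes the same amount of Matérn energy. -/
lemma exists_nat_mul_sq_sum_eval_le {d : ℕ} (hd : 1 ≤ d) {n : ℕ} (hn : 0 < n) (c : ℝ) :
    ∃ D : ℝ, 0 ≤ D ∧ ∀ {ι : Type} [Fintype ι] (y : ι → Fin d → ℝ) (b : ι → ℝ) (ℓ B : ℝ) (J : ℕ),
      0 < ℓ → (∀ j < J, 2 ^ j * ℓ ≤ c) → (∀ i t, |y i t| ≤ ℓ) →
      ∀ Q : MvPolynomial (Fin d) ℝ, Q.totalDegree ≤ n → (∀ k, |Q.coeff k| ≤ B) →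
      J * (ℓ ^ (2 * n) * (∑ i, b i * MvPolynomial.eval (ℓ⁻¹ • y i) Q) ^ 2) ≤
        D * B ^ 2 * ∫ ξ, ‖expSum y b ξ‖ ^ 2 * besselWeight ((n : ℝ) + (d : ℝ) / 2) ξ := by
  have hd' : (1 : ℝ) ≤ d := by exact_mod_cast hd
  have hn' : (0 : ℝ) < n := by exact_mod_cast hn
  have hN : (d : ℝ) / 2 < (n + d : ℕ) := by
    push_cast
    linarith
  obtain ⟨C, hC, h⟩ := exists_sq_sum_eval_le (d := d) n hN
  refine ⟨C * (6 * (1 + c ^ 2) ^ (n + d)), by positivity, ?_⟩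
  intro ι _ y b ℓ B J hℓ hJ hy Q hQ hB
  set s := ∑ i, b i * MvPolynomial.eval (ℓ⁻¹ • y i) Q
  have hterm : ∀ j ∈ Finset.range J, ℓ ^ (2 * n) * s ^ 2 ≤ C * B ^ 2 *
      ∫ ξ, ‖expSum y b ξ‖ ^ 2 * ((2 ^ j * ℓ) ^ (2 * n + d) *
        besselWeight ((n + d : ℕ) : ℝ) ((2 ^ j * ℓ) • ξ)) := by
    intro j _
    have h1 := h y b ℓ (2 ^ j) B hℓ (one_le_pow₀ one_le_two) hy Q hQ hB
    refine (mul_le_mul_of_nonneg_left h1 (by positivity)).trans_eq ?_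
    simp_rw [mul_left_comm (‖expSum y b _‖ ^ 2)]
    rw [integral_const_mul, pow_add, mul_pow _ ℓ (2 * n)]
    ring
  have hi : ∀ j ∈ Finset.range J, Integrable fun ξ : Fin d → ℝ =>
      ‖expSum y b ξ‖ ^ 2 * ((2 ^ j * ℓ) ^ (2 * n + d) *
        besselWeight ((n + d : ℕ) : ℝ) ((2 ^ j * ℓ) • ξ)) := fun j _ =>
    integrable_norm_expSum_pow_mul y b 2
      (((integrable_besselWeight hN).comp_smul (by positivity)).const_mul _)
  have hsum := Finset.sum_le_sum hterm
  rw [Finset.sum_const, Finset.card_range, nsmul_eq_mul, ← Finset.mul_sum,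
    ← integral_finsetSum _ hi] at hsum
  refine hsum.trans ?_
  have hint : ∫ ξ, ∑ j ∈ Finset.range J, ‖expSum y b ξ‖ ^ 2 * ((2 ^ j * ℓ) ^ (2 * n + d) *
        besselWeight ((n + d : ℕ) : ℝ) ((2 ^ j * ℓ) • ξ)) ≤
      6 * (1 + c ^ 2) ^ (n + d) *
        ∫ ξ, ‖expSum y b ξ‖ ^ 2 * besselWeight ((n : ℝ) + (d : ℝ) / 2) ξ := by
    rw [← integral_const_mul]
    refine integral_mono (integrable_finsetSum _ hi)
      ((integrable_norm_expSum_pow_mul y b 2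
        (integrable_besselWeight (by linarith))).const_mul _) fun ξ => ?_
    have h3 := mul_le_mul_of_nonneg_left (sum_dyadic_besselWeight_le hd n J hℓ hJ ξ)
      (sq_nonneg ‖expSum y b ξ‖)
    dsimp only
    rw [← Finset.mul_sum]
    linarith
  refine (mul_le_mul_of_nonneg_left hint (by positivity)).trans_eq ?_
  ring

lemma matern_neg (α : ℝ) (d : ℕ) (x : Fin d → ℝ) : matern α d (-x) = matern α d x := by
  simp [matern]

lemma maternMat_isSymm (α : ℝ) (d : ℕ) {n : ℕ} (w : Fin n → Fin d → ℝ) :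
    (maternMat α d w).IsSymm := by
  ext i j
  simp only [Matrix.transpose_apply, maternMat, Matrix.of_apply]
  rw [← matern_neg, neg_sub]

lemma Matrix.IsSymm.dotProduct_mulVec_comm {ι : Type*} [Fintype ι] {M : Matrix ι ι ℝ}
    (hM : M.IsSymm) (u v : ι → ℝ) : u ⬝ᵥ (M *ᵥ v) = v ⬝ᵥ (M *ᵥ u) := by
  rw [Matrix.dotProduct_mulVec, dotProduct_comm, ← Matrix.mulVec_transpose, hM.eq]

lemma dotProduct_maternMat_mulVec {α : ℝ} (hα : 0 < α) {d n : ℕ} (w : Fin n → Fin d → ℝ)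
    (x : Fin d → ℝ) (a : Fin n → ℝ) :
    a ⬝ᵥ (maternMat α d w *ᵥ a) =
      ∫ ξ, ‖expSum (fun i => w i - x) a ξ‖ ^ 2 * besselWeight (α + (d : ℝ) / 2) ξ := by
  rw [← sum_mul_matern_eq_integral hα]
  simp only [dotProduct, Matrix.mulVec, maternMat, Matrix.of_apply, Finset.mul_sum,
    sub_sub_sub_cancel_right]
  exact Finset.sum_congr rfl fun i _ => Finset.sum_congr rfl fun j _ => by ring

/-- The points `0, w₁ - x, …, w_n - x`. -/
def residualPoints {d n : ℕ} (w : Fin n → Fin d → ℝ) (x : Fin d → ℝ) :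
    Option (Fin n) → Fin d → ℝ :=
  fun o => o.elim 0 fun i => w i - x

/-- The coefficients of the residual `f(x) - ∑ a_i f(w_i)`. -/
def residualCoeffs {n : ℕ} (a : Fin n → ℝ) : Option (Fin n) → ℝ :=
  fun o => o.elim 1 fun i => -a i

/-- The mean squared error of the linear predictor with coefficients `a`. -/
def predictionError (α : ℝ) {d n : ℕ} (w : Fin n → Fin d → ℝ) (x : Fin d → ℝ)
    (a : Fin n → ℝ) : ℝ :=
  ∫ ξ, ‖expSum (residualPoints w x) (residualCoeffs a) ξ‖ ^ 2 * besselWeight (α + (d : ℝ) / 2) ξ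

lemma predictionError_eq {α : ℝ} (hα : 0 < α) {d n : ℕ} (w : Fin n → Fin d → ℝ)
    (x : Fin d → ℝ) (a : Fin n → ℝ) :
    predictionError α w x a = matern α d (x - x) - 2 * (a ⬝ᵥ maternVec α d w x) +
      a ⬝ᵥ (maternMat α d w *ᵥ a) := by
  rw [predictionError, ← sum_mul_matern_eq_integral hα]
  simp only [Fintype.sum_option, residualPoints, residualCoeffs, Option.elim_none,
    Option.elim_some, zero_sub, sub_zero, matern_neg, sub_sub_sub_cancel_right, sub_self,
    dotProduct, Matrix.mulVec, maternMat, maternVec, Matrix.of_apply, Finset.mul_sum,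
    Finset.sum_add_distrib, one_mul, mul_one, neg_mul, mul_neg, Finset.sum_neg_distrib]
  simp only [← Finset.mul_sum, mul_assoc, mul_comm (matern _ _ _) (a _)]
  linarith

lemma predictionError_inv_mulVec {α : ℝ} (hα : 0 < α) {d n : ℕ} {w : Fin n → Fin d → ℝ}
    (hw : IsUnit (maternMat α d w).det) (x : Fin d → ℝ) :
    predictionError α w x ((maternMat α d w)⁻¹ *ᵥ maternVec α d w x) = condVar α d w x := by
  rw [predictionError_eq hα, condVar, Matrix.mulVec_mulVec, Matrix.mul_nonsing_inv _ hw,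
    Matrix.one_mulVec, dotProduct_comm (maternVec α d w x)]
  ring

lemma condVar_le_predictionError {α : ℝ} (hα : 0 < α) {d n : ℕ} {w : Fin n → Fin d → ℝ}
    (hw : IsUnit (maternMat α d w).det) (x : Fin d → ℝ) (a : Fin n → ℝ) :
    condVar α d w x ≤ predictionError α w x a := by
  rw [← predictionError_inv_mulVec hα hw, predictionError_eq hα, predictionError_eq hα]
  obtain ⟨u, hu⟩ : ∃ u, u = (maternMat α d w)⁻¹ *ᵥ maternVec α d w x := ⟨_, rfl⟩
  have hk : maternVec α d w x = maternMat α d w *ᵥ u := by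
    rw [hu, Matrix.mulVec_mulVec, Matrix.mul_nonsing_inv _ hw, Matrix.one_mulVec]
  rw [← hu, hk]
  have hpos : 0 ≤ (a - u) ⬝ᵥ (maternMat α d w *ᵥ (a - u)) := by
    rw [dotProduct_maternMat_mulVec hα w 0]
    exact integral_nonneg fun ξ => mul_nonneg (sq_nonneg _) (besselWeight_nonneg _ _)
  have hsymm := (maternMat_isSymm α d w).dotProduct_mulVec_comm a u
  rw [Matrix.mulVec_sub, sub_dotProduct, dotProduct_sub, dotProduct_sub] at hpos
  linarith

lemma isUnit_det_maternMat {α : ℝ} {d n : ℕ} {w : Fin n → Fin d → ℝ}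
    (hw : ∀ a : Fin n → ℝ, a ⬝ᵥ (maternMat α d w *ᵥ a) = 0 → a = 0) :
    IsUnit (maternMat α d w).det := by
  rw [isUnit_iff_ne_zero]
  intro h
  obtain ⟨v, hv, hv0⟩ := Matrix.exists_mulVec_eq_zero_iff.2 h
  exact hv (hw v (by rw [hv0, dotProduct_zero]))

/-- Coefficients reproducing polynomials of degree at most `l` annihilate the low frequencies. -/
lemma norm_expSum_residual_le {d m l : ℕ} {ℓ c : ℝ} (hℓ : 0 < ℓ) {w : Fin m → Fin d → ℝ}
    {x : Fin d → ℝ} (hy : ∀ i t, |(w i - x) t| ≤ ℓ) {a : Fin m → ℝ} (ha : ∀ i, |a i| ≤ c)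
    (hrep : ∀ P : MvPolynomial (Fin d) ℝ, P.totalDegree ≤ l → MvPolynomial.eval 0 P =
      ∑ i, a i * MvPolynomial.eval (ℓ⁻¹ • (w i - x)) P) (hc : 0 ≤ c) (ξ : Fin d → ℝ) :
    ‖expSum (residualPoints w x) (residualCoeffs a) ξ‖ ≤
      (1 + 3 * m * c) * min 1 ((d * ℓ * ‖ξ‖) ^ (l + 1)) := by
  set r := d * ℓ * ‖ξ‖ with hr
  have hr0 : 0 ≤ r := by positivity
  have hbound : ‖expSum (residualPoints w x) (residualCoeffs a) ξ‖ ≤ 1 + 3 * m * c := by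
    refine (norm_expSum_le _ _ _).trans ?_
    simp only [Fintype.sum_option, residualCoeffs, Option.elim_none, Option.elim_some, abs_one,
      abs_neg]
    have h1 : ∑ i, |a i| ≤ m * c := by
      simpa using Finset.sum_le_sum fun i (_ : i ∈ Finset.univ) => ha i
    have h2 : 0 ≤ m * c := by positivity
    linarith
  have hM : 0 ≤ 1 + 3 * m * c := by positivity
  rcases le_or_gt r 1 with hr1 | hr1
  swap
  · rwa [min_eq_left (one_le_pow₀ hr1.le), mul_one]
  rw [min_eq_right (pow_le_one₀ hr0 hr1)]
  set θ : Fin m → ℝ := fun i => ∑ t, (w i - x) t * ξ t with hθ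
  have hθr : ∀ i, |θ i| ≤ r := by
    intro i
    refine (Finset.abs_sum_le_sum_abs _ _).trans ?_
    have : ∀ t ∈ Finset.univ, |(w i - x) t * ξ t| ≤ ℓ * ‖ξ‖ := by
      intro t _
      rw [abs_mul]
      exact mul_le_mul (hy i t) (norm_le_pi_norm ξ t) (abs_nonneg _) hℓ.le
    refine (Finset.sum_le_sum this).trans_eq ?_
    simp [hr, mul_assoc]
  have hpow : ∀ k < l + 1, ∑ i, a i * θ i ^ k = 0 ^ k := by
    intro k hk
    have hdeg : ((∑ t, MvPolynomial.C (ℓ * ξ t) * MvPolynomial.X t :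
        MvPolynomial (Fin d) ℝ) ^ k).totalDegree ≤ l := by
      refine (MvPolynomial.totalDegree_pow _ _).trans ?_
      have h1 : (∑ t, MvPolynomial.C (ℓ * ξ t) * MvPolynomial.X t :
          MvPolynomial (Fin d) ℝ).totalDegree ≤ 1 := by
        refine MvPolynomial.totalDegree_finsetSum_le fun t _ => ?_
        refine (MvPolynomial.totalDegree_mul _ _).trans ?_
        rw [MvPolynomial.totalDegree_C, MvPolynomial.totalDegree_X]
      calc k * _ ≤ k * 1 := Nat.mul_le_mul_left k h1
        _ ≤ l := by omega
    have h := hrep _ hdeg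
    simp only [map_pow, map_sum, map_mul, MvPolynomial.eval_C, MvPolynomial.eval_X,
      Pi.zero_apply, mul_zero, Finset.sum_const_zero, Pi.smul_apply, smul_eq_mul] at h
    rw [h]
    refine Finset.sum_congr rfl fun i _ => ?_
    congr 2
    refine Finset.sum_congr rfl fun t _ => ?_
    field_simp
  set T : ℂ → ℂ := fun z => ∑ k ∈ Finset.range (l + 1), z ^ k / (k.factorial : ℂ) with hT
  have hTsum : ∑ i, (a i : ℂ) * T ((θ i : ℂ) * Complex.I) = 1 := by
    simp only [hT, Finset.mul_sum]
    rw [Finset.sum_comm]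
    have : ∀ k ∈ Finset.range (l + 1), ∑ i, (a i : ℂ) *
        (((θ i : ℂ) * Complex.I) ^ k / (k.factorial : ℂ)) =
        0 ^ k * Complex.I ^ k / (k.factorial : ℂ) := by
      intro k hk
      have h := congrArg (fun z : ℝ => (z : ℂ)) (hpow k (Finset.mem_range.1 hk))
      push_cast at h
      rw [← h, Finset.sum_mul, Finset.sum_div]
      refine Finset.sum_congr rfl fun i _ => ?_
      rw [mul_pow]
      ring
    rw [Finset.sum_congr rfl this, Finset.sum_range_succ']
    simp
  have hS : expSum (residualPoints w x) (residualCoeffs a) ξ =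
      -∑ i, (a i : ℂ) * (Complex.exp ((θ i : ℂ) * Complex.I) - T ((θ i : ℂ) * Complex.I)) := by
    simp only [mul_sub, Finset.sum_sub_distrib, hTsum]
    simp [expSum, Fintype.sum_option, residualPoints, residualCoeffs, hθ]
    ring
  rw [hS, norm_neg]
  have hterm : ∀ i ∈ Finset.univ, ‖(a i : ℂ) * (Complex.exp ((θ i : ℂ) * Complex.I) -
      T ((θ i : ℂ) * Complex.I))‖ ≤ c * (r ^ (l + 1) * 3) := by
    intro i _
    have hz : ‖(θ i : ℂ) * Complex.I‖ = |θ i| := by simp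
    rw [norm_mul, Complex.norm_real, Real.norm_eq_abs]
    refine mul_le_mul (ha i) ?_ (norm_nonneg _) hc
    refine (Complex.norm_exp_sub_sum_le_norm_mul_exp _ _).trans ?_
    rw [hz]
    have he : Real.exp |θ i| ≤ 3 :=
      (Real.exp_le_exp.2 ((hθr i).trans hr1)).trans (by linarith [Real.exp_one_lt_d9])
    gcongr
    exact hθr i
  refine ((norm_sum_le _ _).trans (Finset.sum_le_sum hterm)).trans ?_
  rw [Finset.sum_const, Finset.card_univ, Fintype.card_fin, nsmul_eq_mul]
  nlinarith [pow_nonneg hr0 (l + 1)]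

/-- The radial majorant of the spectral density of the residual at scale `L`. -/
def radialMajorant (α : ℝ) (d n : ℕ) (L y : ℝ) : ℝ :=
  min 1 ((L * y) ^ n) ^ 2 * (1 + y ^ 2) ^ (-(α + (d : ℝ) / 2))

section RadialMajorant

variable {α : ℝ} {d n : ℕ} {L : ℝ}

lemma min_one_pow_sq_le (hL : 0 ≤ L) {y : ℝ} (hy : 0 ≤ y) :
    0 ≤ min 1 ((L * y) ^ n) ∧ min 1 ((L * y) ^ n) ^ 2 ≤ 1 ∧
      min 1 ((L * y) ^ n) ^ 2 ≤ L ^ (2 * n) * y ^ (2 * n) := by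
  have h0 : 0 ≤ min 1 ((L * y) ^ n) := le_min zero_le_one (by positivity)
  refine ⟨h0, pow_le_one₀ h0 (min_le_left _ _), ?_⟩
  calc min 1 ((L * y) ^ n) ^ 2 ≤ ((L * y) ^ n) ^ 2 := by
        gcongr
        exact min_le_right _ _
    _ = _ := by rw [← pow_mul, mul_pow, mul_comm n 2]

lemma integrable_radialMajorant (hα : 0 < α) (hL : 0 < L) :
    Integrable fun ξ : Fin d → ℝ => radialMajorant α d n L ‖ξ‖ := by
  have h := integrable_rpow_neg_one_add_norm_sq (E := Fin d → ℝ) (μ := volume)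
    (r := 2 * (α + (d : ℝ) / 2)) (by simp; linarith)
  have hcont : Continuous fun ξ : Fin d → ℝ => radialMajorant α d n L ‖ξ‖ := by
    unfold radialMajorant
    refine Continuous.mul (by fun_prop) (Continuous.rpow_const (by fun_prop) fun ξ => Or.inl ?_)
    positivity
  refine h.mono' hcont.aestronglyMeasurable (Filter.Eventually.of_forall fun ξ => ?_)
  obtain ⟨-, h1, -⟩ := min_one_pow_sq_le (n := n) hL.le (norm_nonneg ξ)
  have h2 : 0 ≤ (1 + ‖ξ‖ ^ 2) ^ (-(α + (d : ℝ) / 2)) := by positivity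
  rw [Real.norm_eq_abs, radialMajorant, abs_of_nonneg (mul_nonneg (sq_nonneg _) h2)]
  refine (mul_le_of_le_one_left h2 h1).trans_eq ?_
  congr 1
  ring

lemma pow_mul_rpow_le (hα : 0 < α) (hd : 1 ≤ d) {y : ℝ} (hy : 0 < y) :
    y ^ (d - 1) * (1 + y ^ 2) ^ (-(α + (d : ℝ) / 2)) ≤ y ^ (-2 * α - 1) := by
  have h1 : (1 + y ^ 2) ^ (-(α + (d : ℝ) / 2)) ≤ (y ^ 2) ^ (-(α + (d : ℝ) / 2)) :=
    Real.rpow_le_rpow_of_nonpos (by positivity) (by linarith) (by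
      have : 0 ≤ α + (d : ℝ) / 2 := by positivity
      linarith)
  refine (mul_le_mul_of_nonneg_left h1 (by positivity)).trans_eq ?_
  rw [← Real.rpow_natCast y 2, ← Real.rpow_mul hy.le, ← Real.rpow_natCast y (d - 1),
    ← Real.rpow_add hy]
  congr 1
  push_cast [hd]
  ring

lemma radialMajorant_tail_le (hα : 0 < α) (hd : 1 ≤ d) (hL : 0 < L) {y : ℝ} (hy : 0 < y) :
    y ^ (d - 1) * radialMajorant α d n L y ≤ y ^ (-2 * α - 1) := by
  refine le_trans ?_ (pow_mul_rpow_le hα hd hy)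
  unfold radialMajorant
  gcongr
  exact mul_le_of_le_one_left (by positivity) (min_one_pow_sq_le hL.le hy.le).2.1

lemma radialMajorant_core_le (hα : 0 < α) (hd : 1 ≤ d) (hL : 0 < L) {y : ℝ} (hy : 0 < y) :
    y ^ (d - 1) * radialMajorant α d n L y ≤ L ^ (2 * n) * y ^ (2 * n - 2 * α - 1) := by
  have h1 := pow_mul_rpow_le hα hd hy
  have h2 := (min_one_pow_sq_le (n := n) hL.le hy.le).2.2
  calc y ^ (d - 1) * radialMajorant α d n L y
      = min 1 ((L * y) ^ n) ^ 2 * (y ^ (d - 1) * (1 + y ^ 2) ^ (-(α + (d : ℝ) / 2))) := by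
        rw [radialMajorant]
        ring
    _ ≤ (L ^ (2 * n) * y ^ (2 * n)) * y ^ (-2 * α - 1) := by gcongr
    _ = _ := by
        rw [mul_assoc, ← Real.rpow_natCast y (2 * n), ← Real.rpow_add hy]
        congr 2
        push_cast
        ring

lemma radialMajorant_near_zero_le (hα : 0 < α) (hL : 0 < L) {y : ℝ} (hy : 0 < y) (hy1 : y ≤ 1) :
    y ^ (d - 1) * radialMajorant α d n L y ≤ L ^ (2 * n) := by
  have h2 := (min_one_pow_sq_le (n := n) hL.le hy.le).2.2
  have h3 : (1 + y ^ 2) ^ (-(α + (d : ℝ) / 2)) ≤ 1 :=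
    Real.rpow_le_one_of_one_le_of_nonpos (by nlinarith) (by
      have : 0 ≤ α + (d : ℝ) / 2 := by positivity
      linarith)
  have h4 : L ^ (2 * n) * y ^ (2 * n) ≤ L ^ (2 * n) :=
    mul_le_of_le_one_right (by positivity) (pow_le_one₀ hy.le hy1)
  calc y ^ (d - 1) * radialMajorant α d n L y
      ≤ 1 * (L ^ (2 * n) * 1) := by
        unfold radialMajorant
        gcongr
        · exact pow_le_one₀ hy.le hy1
        · exact h2.trans h4
    _ = _ := by ring

lemma integrableOn_pow_mul_radialMajorant (hα : 0 < α) (hd : 1 ≤ d) (hL : 0 < L) :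
    IntegrableOn (fun y => y ^ (d - 1) * radialMajorant α d n L y) (Set.Ioi 0) := by
  have : Nonempty (Fin d) := ⟨⟨0, hd⟩⟩
  have h := (integrable_fun_norm_addHaar (volume : Measure (Fin d → ℝ))
    (f := radialMajorant α d n L)).1 (integrable_radialMajorant hα hL)
  simpa using h

lemma integral_tail_le (hα : 0 < α) (hd : 1 ≤ d) (hL : 0 < L) :
    ∫ y in Set.Ioi L⁻¹, y ^ (d - 1) * radialMajorant α d n L y ≤ L ^ (2 * α) / (2 * α) := by
  have hL' : 0 < L⁻¹ := inv_pos.2 hL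
  have h := setIntegral_mono_on
    ((integrableOn_pow_mul_radialMajorant (n := n) hα hd hL).mono_set
      (Set.Ioi_subset_Ioi hL'.le))
    (integrableOn_Ioi_rpow_of_lt (a := -2 * α - 1) (by linarith) hL') measurableSet_Ioi
    fun y hy => radialMajorant_tail_le hα hd hL (hL'.trans hy)
  refine h.trans_eq ?_
  rw [integral_Ioi_rpow_of_lt (by linarith) hL', Real.inv_rpow hL.le, ← Real.rpow_neg hL.le,
    neg_div, ← div_neg]
  congr 1
  · congr 1
    ring
  · ring

lemma integral_radialMajorant_eq (hα : 0 < α) (hd : 1 ≤ d) (hL : 0 < L) :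
    ∫ ξ : Fin d → ℝ, radialMajorant α d n L ‖ξ‖ =
      d * volume.real (Metric.ball (0 : Fin d → ℝ) 1) *
        ((∫ y in Set.Ioc 0 L⁻¹, y ^ (d - 1) * radialMajorant α d n L y) +
          ∫ y in Set.Ioi L⁻¹, y ^ (d - 1) * radialMajorant α d n L y) := by
  have : Nonempty (Fin d) := ⟨⟨0, hd⟩⟩
  have hL' : 0 ≤ L⁻¹ := (inv_pos.2 hL).le
  have hint := integrableOn_pow_mul_radialMajorant (n := n) hα hd hL
  rw [← setIntegral_union (Set.Ioc_disjoint_Ioi le_rfl) measurableSet_Ioi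
    (hint.mono_set Set.Ioc_subset_Ioi_self) (hint.mono_set (Set.Ioi_subset_Ioi hL')),
    Set.Ioc_union_Ioi_eq_Ioi hL', integral_fun_norm_addHaar]
  simp [mul_assoc]

lemma exists_integral_radialMajorant_le (hα : 0 < α) (hd : 1 ≤ d) (hn : α < n) :
    ∃ C : ℝ, 0 ≤ C ∧ ∀ L : ℝ, 0 < L →
      ∫ ξ : Fin d → ℝ, radialMajorant α d n L ‖ξ‖ ≤ C * L ^ (2 * α) := by
  have hn' : 0 < 2 * n - 2 * α := by linarith
  refine ⟨d * volume.real (Metric.ball (0 : Fin d → ℝ) 1) *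
    (1 / (2 * n - 2 * α) + 1 / (2 * α)), by positivity, fun L hL => ?_⟩
  have hL' : 0 ≤ L⁻¹ := (inv_pos.2 hL).le
  have hcore : ∫ y in Set.Ioc 0 L⁻¹, y ^ (d - 1) * radialMajorant α d n L y ≤
      L ^ (2 * α) / (2 * n - 2 * α) := by
    have hi : IntervalIntegrable (fun y : ℝ => y ^ (2 * n - 2 * α - 1)) volume 0 L⁻¹ :=
      intervalIntegral.intervalIntegrable_rpow' (by linarith)
    have h := setIntegral_mono_on
      ((integrableOn_pow_mul_radialMajorant (n := n) hα hd hL).mono_set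
        (Set.Ioc_subset_Ioi_self : Set.Ioc 0 L⁻¹ ⊆ _))
      (((intervalIntegrable_iff_integrableOn_Ioc_of_le hL').1 hi).const_mul (L ^ (2 * n)))
      measurableSet_Ioc fun y hy => radialMajorant_core_le hα hd hL hy.1
    refine h.trans_eq ?_
    rw [integral_const_mul, ← intervalIntegral.integral_of_le hL',
      integral_rpow (Or.inl (by linarith)), sub_add_cancel, Real.zero_rpow hn'.ne', sub_zero,
      ← mul_div_assoc, Real.inv_rpow hL.le, ← Real.rpow_neg hL.le, ← Real.rpow_natCast,
      ← Real.rpow_add hL]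
    congr 2
    push_cast
    ring
  rw [integral_radialMajorant_eq hα hd hL]
  calc _ ≤ d * volume.real (Metric.ball (0 : Fin d → ℝ) 1) *
        (L ^ (2 * α) / (2 * n - 2 * α) + L ^ (2 * α) / (2 * α)) := by
        gcongr
        exact integral_tail_le hα hd hL
    _ = _ := by ring

lemma exists_integral_radialMajorant_le_log (hd : 1 ≤ d) (hn : 0 < n) :
    ∃ C : ℝ, 0 ≤ C ∧ ∀ L : ℝ, 0 < L → L ≤ 1 / 2 →
      ∫ ξ : Fin d → ℝ, radialMajorant n d n L ‖ξ‖ ≤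
        C * (L ^ (2 * (n : ℝ)) * Real.log (1 / L)) := by
  have hn' : (0 : ℝ) < n := by exact_mod_cast hn
  refine ⟨d * volume.real (Metric.ball (0 : Fin d → ℝ) 1) * (3 + 2 / (2 * n)), by positivity,
    fun L hL hL2 => ?_⟩
  have hL' : 1 ≤ L⁻¹ := (one_le_inv₀ hL).2 (by linarith)
  have hpow : L ^ (2 * n) = L ^ (2 * (n : ℝ)) := by
    rw [← Real.rpow_natCast]
    push_cast
    rfl
  have hlog : 1 ≤ 2 * Real.log (1 / L) := by
    have h1 : Real.log 2 ≤ Real.log (1 / L) :=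
      Real.log_le_log (by norm_num) (by rw [le_div_iff₀ hL]; linarith)
    linarith [Real.log_two_gt_d9]
  have hint := integrableOn_pow_mul_radialMajorant (n := n) hn' hd hL
  have hzero : ∫ y in Set.Ioc 0 1, y ^ (d - 1) * radialMajorant n d n L y ≤ L ^ (2 * n) := by
    have h := setIntegral_mono_on (hint.mono_set (Set.Ioc_subset_Ioi_self : Set.Ioc (0 : ℝ) 1 ⊆ _))
      (integrableOn_const (C := L ^ (2 * n)) (by simp))
      measurableSet_Ioc fun y hy => radialMajorant_near_zero_le hn' hL hy.1 hy.2
    simpa using h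
  have hmid : ∫ y in Set.Ioc 1 L⁻¹, y ^ (d - 1) * radialMajorant n d n L y ≤
      L ^ (2 * n) * Real.log (1 / L) := by
    have hi : IntervalIntegrable (fun y : ℝ => y⁻¹) volume 1 L⁻¹ :=
      intervalIntegral.intervalIntegrable_inv (fun y hy => by
        rw [Set.uIcc_of_le hL'] at hy
        linarith [hy.1]) continuousOn_id
    have h := setIntegral_mono_on
      (hint.mono_set ((Set.Ioc_subset_Ioi_self : Set.Ioc 1 L⁻¹ ⊆ _).trans
        (Set.Ioi_subset_Ioi zero_le_one)))
      (((intervalIntegrable_iff_integrableOn_Ioc_of_le hL').1 hi).const_mul (L ^ (2 * n)))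
      measurableSet_Ioc fun y hy => by
        have hy0 : 0 < y := zero_lt_one.trans hy.1
        have := radialMajorant_core_le (n := n) hn' hd hL hy0
        rwa [sub_self, zero_sub, Real.rpow_neg_one] at this
    refine h.trans_eq ?_
    rw [integral_const_mul, ← intervalIntegral.integral_of_le hL',
      integral_inv_of_pos one_pos (by positivity), div_one, one_div]
  rw [integral_radialMajorant_eq hn' hd hL, ← Set.Ioc_union_Ioc_eq_Ioc zero_le_one hL',
    setIntegral_union (Set.Ioc_disjoint_Ioc_of_le le_rfl) measurableSet_Ioc
      (hint.mono_set Set.Ioc_subset_Ioi_self)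
      (hint.mono_set (Set.Ioc_subset_Ioi_self.trans (Set.Ioi_subset_Ioi zero_le_one)))]
  have htail := integral_tail_le (n := n) hn' hd hL
  rw [← hpow] at htail ⊢
  have hp : 0 < L ^ (2 * n) := by positivity
  have h1 : L ^ (2 * n) ≤ L ^ (2 * n) * (2 * Real.log (1 / L)) :=
    le_mul_of_one_le_right hp.le hlog
  have h2 : L ^ (2 * n) / (2 * n) ≤ L ^ (2 * n) * (2 * Real.log (1 / L)) / (2 * n) := by gcongr
  calc _ ≤ d * volume.real (Metric.ball (0 : Fin d → ℝ) 1) *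
        (L ^ (2 * n) * (2 * Real.log (1 / L)) + L ^ (2 * n) * Real.log (1 / L) +
          L ^ (2 * n) * (2 * Real.log (1 / L)) / (2 * n)) := by
        gcongr
        · exact hzero.trans h1
        · exact htail.trans h2
    _ = _ := by ring

end RadialMajorant

lemma predictionError_le {α : ℝ} (hα : 0 < α) {d m l : ℕ} {cL L c : ℝ} (hcL : 0 < cL) (hL : 0 < L)
    {w : Fin m → Fin d → ℝ} {x : Fin d → ℝ} (hy : ∀ i t, |(w i - x) t| ≤ cL * L) {a : Fin m → ℝ}
    (ha : ∀ i, |a i| ≤ c) (hrep : ∀ P : MvPolynomial (Fin d) ℝ, P.totalDegree ≤ l →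
      MvPolynomial.eval 0 P = ∑ i, a i * MvPolynomial.eval ((cL * L)⁻¹ • (w i - x)) P)
    (hc : 0 ≤ c) :
    predictionError α w x a ≤ ((1 + 3 * m * c) * max 1 (d * cL) ^ (l + 1)) ^ 2 *
      ∫ ξ : Fin d → ℝ, radialMajorant α d (l + 1) L ‖ξ‖ := by
  rw [predictionError, ← integral_const_mul]
  refine integral_mono
    (integrable_norm_expSum_pow_mul _ _ 2 (integrable_besselWeight (by linarith)))
    ((integrable_radialMajorant hα hL).const_mul _) fun ξ => ?_
  have hM : 0 ≤ 1 + 3 * m * c := by positivity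
  have h1 := norm_expSum_residual_le (mul_pos hcL hL) hy ha hrep hc ξ
  have hK : (1 : ℝ) ≤ max 1 (d * cL) := le_max_left _ _
  have h2 : min 1 ((d * (cL * L) * ‖ξ‖) ^ (l + 1)) ≤
      max 1 (d * cL) ^ (l + 1) * min 1 ((L * ‖ξ‖) ^ (l + 1)) := by
    rw [mul_min_of_nonneg _ _ (by positivity), mul_one]
    refine min_le_min (one_le_pow₀ hK) ?_
    rw [← mul_pow]
    refine pow_le_pow_left₀ (by positivity) ?_ _
    calc d * (cL * L) * ‖ξ‖ = (d * cL) * (L * ‖ξ‖) := by ring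
      _ ≤ _ := by
        gcongr
        exact le_max_right _ _
  have h3 := h1.trans (mul_le_mul_of_nonneg_left h2 hM)
  calc ‖expSum (residualPoints w x) (residualCoeffs a) ξ‖ ^ 2 * besselWeight (α + (d : ℝ) / 2) ξ
      ≤ ((1 + 3 * m * c) * (max 1 (d * cL) ^ (l + 1) * min 1 ((L * ‖ξ‖) ^ (l + 1)))) ^ 2 *
        (1 + ‖ξ‖ ^ 2) ^ (-(α + (d : ℝ) / 2)) :=
        mul_le_mul (pow_le_pow_left₀ (norm_nonneg _) h3 2)
          (besselWeight_le_norm (by positivity) ξ) (besselWeight_nonneg _ _) (sq_nonneg _)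
    _ = _ := by
        rw [radialMajorant]
        ring

lemma sum_residualCoeffs_mul_eval {d m : ℕ} {ℓ : ℝ} {w : Fin m → Fin d → ℝ} {x : Fin d → ℝ}
    {Q : MvPolynomial (Fin d) ℝ} (hQ : ∀ i, MvPolynomial.eval (ℓ⁻¹ • (w i - x)) Q = 0)
    (hQ0 : MvPolynomial.eval 0 Q = 1) (a : Fin m → ℝ) :
    ∑ o, residualCoeffs a o * MvPolynomial.eval (ℓ⁻¹ • residualPoints w x o) Q = 1 := by
  simp only [Fintype.sum_option, residualCoeffs, residualPoints, Option.elim_none,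
    Option.elim_some, smul_zero, hQ, hQ0, mul_zero, Finset.sum_const_zero, mul_one, add_zero]

lemma abs_residualPoints_le {d m : ℕ} {ℓ : ℝ} (hℓ : 0 ≤ ℓ) {w : Fin m → Fin d → ℝ}
    {x : Fin d → ℝ} (hy : ∀ i t, |(w i - x) t| ≤ ℓ) (o : Option (Fin m)) (t : Fin d) :
    |residualPoints w x o t| ≤ ℓ := by
  cases o with
  | none => simpa [residualPoints] using hℓ
  | some i => exact hy i t

lemma lbelow_add_one {α : ℝ} (hα : 0 < α) : lbelow α + 1 = ⌈α⌉₊ :=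
  Nat.sub_add_cancel (Nat.ceil_pos.2 hα)

lemma le_lbelow_add_one {α : ℝ} (hα : 0 < α) : α ≤ (lbelow α + 1 : ℕ) := by
  rw [lbelow_add_one hα]
  exact Nat.le_ceil α

lemma IsNatVal.eq_lbelow_add_one {α : ℝ} (hα : 0 < α) (h : IsNatVal α) :
    α = (lbelow α + 1 : ℕ) := by
  rw [lbelow_add_one hα]
  obtain ⟨n, rfl⟩ := h
  rw [Nat.ceil_natCast]

lemma lt_lbelow_add_one {α : ℝ} (hα : 0 < α) (h : ¬ IsNatVal α) : α < (lbelow α + 1 : ℕ) :=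
  lt_of_le_of_ne (le_lbelow_add_one hα) fun h' => h ⟨_, h'⟩

open Classical in
/-- The factor `Λ`: `ln(1/L)` for integer regularity, `1` otherwise. -/
def logFactor (α L : ℝ) : ℝ := if IsNatVal α then Real.log (1 / L) else 1

lemma exists_integral_radialMajorant_le_logFactor {α : ℝ} (hα : 0 < α) {d : ℕ} (hd : 1 ≤ d) :
    ∃ C : ℝ, 0 ≤ C ∧ ∀ L : ℝ, 0 < L → L ≤ 1 / 2 →
      ∫ ξ : Fin d → ℝ, radialMajorant α d (lbelow α + 1) L ‖ξ‖ ≤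
        C * (L ^ (2 * α) * logFactor α L) := by
  by_cases h : IsNatVal α
  · simp only [logFactor, if_pos h]
    have h' := exists_integral_radialMajorant_le_log hd (Nat.succ_pos (lbelow α))
    rwa [Nat.succ_eq_add_one, ← h.eq_lbelow_add_one hα] at h'
  · simp only [logFactor, if_neg h, mul_one]
    obtain ⟨C, hC, hle⟩ := exists_integral_radialMajorant_le hα hd (lt_lbelow_add_one hα h)
    exact ⟨C, hC, fun L hL _ => hle L hL⟩

/-- There are at least `ln(1/L)` dyadic scales between `L` and `1`. -/
lemma exists_dyadic_count {L : ℝ} (hL : 0 < L) (hL1 : L ≤ 1) :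
    ∃ J : ℕ, Real.log (1 / L) ≤ J ∧ ∀ j < J, 2 ^ j * L ≤ 1 := by
  refine ⟨⌈Real.logb 2 (1 / L)⌉₊, ?_, fun j hj => ?_⟩
  · refine le_trans ?_ (Nat.le_ceil _)
    have h0 : 0 ≤ Real.log (1 / L) := Real.log_nonneg ((one_le_div hL).2 hL1)
    rw [Real.logb, le_div_iff₀ (Real.log_pos one_lt_two)]
    exact mul_le_of_le_one_right h0 (by linarith [Real.log_two_lt_d9])
  · have h := (Real.lt_logb_iff_rpow_lt one_lt_two (by positivity)).1 (Nat.lt_ceil.1 hj)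
    rw [Real.rpow_natCast, lt_div_iff₀ hL] at h
    exact h.le

lemma exists_le_mul_predictionError {α : ℝ} (hα : 0 < α) {d : ℕ} (hd : 1 ≤ d) {cL : ℝ}
    (hcL : 0 < cL) (B : ℝ) :
    ∃ D : ℝ, 0 ≤ D ∧ ∀ L : ℝ, 0 < L → L ≤ 1 → ∀ (m : ℕ) (w : Fin m → Fin d → ℝ) (x : Fin d → ℝ),
      (∀ i t, |(w i - x) t| ≤ cL * L) →
      ∀ Q : MvPolynomial (Fin d) ℝ, Q.totalDegree ≤ lbelow α + 1 →
      (∀ i, MvPolynomial.eval ((cL * L)⁻¹ • (w i - x)) Q = 0) → MvPolynomial.eval 0 Q = 1 →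
      (∀ k, |Q.coeff k| ≤ B) → ∀ a : Fin m → ℝ,
      L ^ (2 * α) * logFactor α L ≤ D * predictionError α w x a := by
  have hscale : 0 < cL ^ (2 * α) := by positivity
  by_cases h : IsNatVal α
  · obtain ⟨D, hD, hle⟩ := exists_nat_mul_sq_sum_eval_le hd (Nat.succ_pos (lbelow α)) cL
    refine ⟨D * B ^ 2 / cL ^ (2 * α), by positivity,
      fun L hL hL1 m w x hy Q hQ hQw hQ0 hB a => ?_⟩
    have hℓ : 0 < cL * L := mul_pos hcL hL
    obtain ⟨J, hJ, hJL⟩ := exists_dyadic_count hL hL1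
    have h1 := hle (residualPoints w x) (residualCoeffs a) (cL * L) B J hℓ
      (fun j hj => by
        rw [mul_left_comm]
        exact mul_le_of_le_one_right hcL.le (hJL j hj))
      (abs_residualPoints_le hℓ.le hy) Q hQ hB
    rw [sum_residualCoeffs_mul_eval hQw hQ0, Nat.succ_eq_add_one, ← h.eq_lbelow_add_one hα,
      one_pow, mul_one, ← Real.rpow_natCast, Nat.cast_mul, ← h.eq_lbelow_add_one hα,
      Nat.cast_ofNat, Real.mul_rpow hcL.le hL.le] at h1
    rw [logFactor, if_pos h, div_mul_eq_mul_div, le_div_iff₀ hscale]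
    refine le_trans ?_ h1
    calc L ^ (2 * α) * Real.log (1 / L) * cL ^ (2 * α)
        ≤ L ^ (2 * α) * J * cL ^ (2 * α) := by gcongr
      _ = _ := by ring
  · obtain ⟨D, hD, hle⟩ := exists_rpow_mul_sq_sum_eval_le hd hα (le_lbelow_add_one hα) cL
    refine ⟨D * B ^ 2 / cL ^ (2 * α), by positivity,
      fun L hL hL1 m w x hy Q hQ hQw hQ0 hB a => ?_⟩
    have hℓ : 0 < cL * L := mul_pos hcL hL
    have h1 := hle (residualPoints w x) (residualCoeffs a) (cL * L) B hℓ
      (mul_le_of_le_one_right hcL.le hL1) (abs_residualPoints_le hℓ.le hy) Q hQ hB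
    rw [sum_residualCoeffs_mul_eval hQw hQ0, one_pow, mul_one,
      Real.mul_rpow hcL.le hL.le] at h1
    rw [logFactor, if_neg h, mul_one, div_mul_eq_mul_div, le_div_iff₀ hscale, mul_comm]
    exact h1

lemma exists_abs_coeff_bound {d : ℕ} (P : MvPolynomial (Fin d) ℝ) :
    ∃ B, ∀ k, |P.coeff k| ≤ B := by
  refine ⟨∑ k ∈ P.support, |P.coeff k|, fun k => ?_⟩
  by_cases hk : k ∈ P.support
  · exact Finset.single_le_sum (f := fun k => |P.coeff k|) (fun _ _ => abs_nonneg _) hk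
  · rw [MvPolynomial.notMem_support_iff.1 hk, abs_zero]
    exact Finset.sum_nonneg fun _ _ => abs_nonneg _

/-- The Matérn matrix is invertible at points admitting a Lagrange basis. -/
lemma isUnit_det_maternMat_of_lagrange {α : ℝ} (hα : 0 < α) {d : ℕ} (hd : 1 ≤ d) {m : ℕ} {ℓ : ℝ}
    (hℓ : 0 < ℓ) {w : Fin m → Fin d → ℝ} {x : Fin d → ℝ} (hy : ∀ i t, |(w i - x) t| ≤ ℓ)
    {e : Fin m → MvPolynomial (Fin d) ℝ} (hdeg : ∀ i, (e i).totalDegree ≤ lbelow α)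
    (he : ∀ i j, MvPolynomial.eval (ℓ⁻¹ • (w j - x)) (e i) = if i = j then 1 else 0) :
    IsUnit (maternMat α d w).det := by
  refine isUnit_det_maternMat fun a ha => funext fun i => ?_
  obtain ⟨B, hB⟩ := exists_abs_coeff_bound (e i)
  obtain ⟨D, -, hle⟩ := exists_rpow_mul_sq_sum_eval_le hd hα (le_lbelow_add_one hα) ℓ
  have h := hle (fun j => w j - x) a ℓ B hℓ le_rfl hy (e i) ((hdeg i).trans (Nat.le_succ _)) hB
  rw [← dotProduct_maternMat_mulVec hα, ha, mul_zero] at h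
  simp only [he, mul_ite, mul_one, mul_zero, Finset.sum_ite_eq, Finset.mem_univ, if_true] at h
  have hpos : 0 < ℓ ^ (2 * α) := by positivity
  exact pow_eq_zero_iff two_ne_zero |>.1 (le_antisymm (nonpos_of_mul_nonpos_right h hpos)
    (sq_nonneg _))

/-- Theorem `var`: under the geometric hypotheses at scale `L ∈ (0,1/2]`,
the conditional variance is of order `L^{2α}` (with an extra `ln(1/L)` factor when `α ∈ ℕ`),
with constants depending only on `α, d, c_d, c_L, c_N`. -/
theorem stmt12 (α : ℝ) (hα : 0 < α) (d : ℕ) (hd : 1 ≤ d)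
    (cL cd cN : ℝ) (hcd : 0 < cd) (hcLcd : cd ≤ cL) (hcN : 0 < cN) :
    ∃ c₁ c₂ : ℝ, 0 < c₁ ∧ c₁ ≤ c₂ ∧
      ∀ L : ℝ, 0 < L → L ≤ 1 / 2 → ∀ x : Fin d → ℝ,
        ∀ w : Fin ((lbelow α + d).choose (lbelow α)) → Fin d → ℝ,
          GeomHyp α d cL cd cN L w x →
          IsUnit (maternMat α d w).det ∧
          (¬ IsNatVal α →
            c₁ * L ^ (2 * α) ≤ condVar α d w x ∧
              condVar α d w x ≤ c₂ * L ^ (2 * α)) ∧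
          (IsNatVal α →
            c₁ * (L ^ (2 * α) * Real.log (1 / L)) ≤ condVar α d w x ∧
              condVar α d w x ≤ c₂ * (L ^ (2 * α) * Real.log (1 / L))) := by
  have hcL : 0 < cL := hcd.trans_le hcLcd
  obtain ⟨B, hgeom⟩ := exists_polynomials_of_geomHyp α hd hcd hcLcd hcN
  obtain ⟨D, hD, hlow⟩ := exists_le_mul_predictionError hα hd hcL B
  obtain ⟨C, -, hup⟩ := exists_integral_radialMajorant_le_logFactor hα hd
  set M : ℝ := ((1 + 3 * ((lbelow α + d).choose (lbelow α) : ℕ) * cN) *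
    max 1 (d * cL) ^ (lbelow α + 1)) ^ 2
  have hM0 : 0 ≤ M := sq_nonneg _
  refine ⟨(D + 1)⁻¹, max (D + 1)⁻¹ (M * C), by positivity, le_max_left _ _,
    fun L hL hL2 x w hG => ?_⟩
  obtain ⟨hy, ⟨e, hedeg, helag, hecN, herep⟩, Q, hQdeg, hQw, hQ0, hQB⟩ := hgeom L hL x w hG
  have hunit : IsUnit (maternMat α d w).det :=
    isUnit_det_maternMat_of_lagrange hα hd (mul_pos hcL hL) hy hedeg helag
  have hΛ : 0 ≤ L ^ (2 * α) * logFactor α L := by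
    have hlog : 0 ≤ Real.log (1 / L) :=
      Real.log_nonneg ((one_le_div hL).2 (by linarith))
    unfold logFactor
    split_ifs <;> positivity
  have hlower : (D + 1)⁻¹ * (L ^ (2 * α) * logFactor α L) ≤ condVar α d w x := by
    have h := hlow L hL (by linarith) _ w x hy Q hQdeg hQw hQ0 hQB
      ((maternMat α d w)⁻¹ *ᵥ maternVec α d w x)
    have h0 : 0 ≤ predictionError α w x ((maternMat α d w)⁻¹ *ᵥ maternVec α d w x) :=
      integral_nonneg fun ξ => mul_nonneg (sq_nonneg _) (besselWeight_nonneg _ _)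
    rw [predictionError_inv_mulVec hα hunit] at h h0
    rw [inv_mul_le_iff₀ (by positivity)]
    linarith
  have hupper : condVar α d w x ≤
      max (D + 1)⁻¹ (M * C) * (L ^ (2 * α) * logFactor α L) := by
    calc condVar α d w x
        ≤ predictionError α w x fun i => MvPolynomial.eval 0 (e i) :=
          condVar_le_predictionError hα hunit x _
      _ ≤ M * ∫ ξ : Fin d → ℝ, radialMajorant α d (lbelow α + 1) L ‖ξ‖ :=
          predictionError_le hα hcL hL hy hecN herep hcN.le
      _ ≤ M * (C * (L ^ (2 * α) * logFactor α L)) :=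
          mul_le_mul_of_nonneg_left (hup L hL hL2) hM0
      _ ≤ _ := by
          rw [← mul_assoc]
          exact mul_le_mul_of_nonneg_right (le_max_right _ _) hΛ
  refine ⟨hunit, fun h => ?_, fun h => ?_⟩
  · simp only [logFactor, if_neg h, mul_one] at hlower hupper
    exact ⟨hlower, hupper⟩
  · simp only [logFactor, if_pos h] at hlower hupper
    exact ⟨hlower, hupper⟩
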